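/- Let n ≥ 7, let p = (n+6)/(n−6), and let u : ℝⁿ → ℝ be a smooth solution of the triharmonic Lane–Emden equation (−Δ)³u = |u|^{p−1}u that is stable outside some compact set Θ ⊂ ℝⁿ. Then u has finite energy, namely ∫_{ℝⁿ} ‖∇(Δu)‖² dx = ∫_{ℝⁿ} |u|^{p+1} dx < +∞. -/

import Mathlib

open MeasureTheory Filter

noncomputable section

/-- The Euclidean Laplacian of `u` at `x`. -/
def laplacian {n : ℕ} (u : EuclideanSpace ℝ (Fin n) → ℝ) (x : EuclideanSpace ℝ (Fin n)) : ℝ :=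
  ∑ i : Fin n, iteratedFDeriv ℝ 2 u x ![EuclideanSpace.single i 1, EuclideanSpace.single i 1]


/-- Shorthand for Euclidean space. -/
abbrev EE (n : ℕ) := EuclideanSpace ℝ (Fin n)

/-- Smoothness. -/
abbrev Sm {n : ℕ} (f : EE n → ℝ) : Prop := ContDiff ℝ (⊤ : ℕ∞) f

/-- Partial derivative. -/
def Dd {n : ℕ} (i : Fin n) (f : EE n → ℝ) (x : EE n) : ℝ :=
  fderiv ℝ f x (EuclideanSpace.single i 1)

lemma Sm.diff {n : ℕ} {f : EE n → ℝ} (hf : Sm f) : Differentiable ℝ f :=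
  ContDiff.differentiable hf (by simp)

lemma Sm.dd {n : ℕ} {f : EE n → ℝ} (hf : Sm f) (i : Fin n) : Sm (Dd i f) := by
  unfold Dd Sm
  have h : ContDiff ℝ (⊤ : ℕ∞) (fderiv ℝ f) := hf.fderiv_right (by simp)
  exact h.clm_apply contDiff_const

lemma dd_mul {n : ℕ} {f g : EE n → ℝ} (hf : Sm f) (hg : Sm g) (i : Fin n) :
    Dd i (fun x => f x * g x) = fun x => f x * Dd i g x + Dd i f x * g x := by
  funext x
  unfold Dd
  rw [fderiv_fun_mul (hf.diff x) (hg.diff x)]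
  simp [mul_comm]

lemma dd_add {n : ℕ} {f g : EE n → ℝ} (hf : Sm f) (hg : Sm g) (i : Fin n) :
    Dd i (fun x => f x + g x) = fun x => Dd i f x + Dd i g x := by
  funext x
  unfold Dd
  rw [fderiv_fun_add (hf.diff x) (hg.diff x)]
  simp

lemma dd_sum {n : ℕ} {ι : Type*} (s : Finset ι) {f : ι → EE n → ℝ} (hf : ∀ j, Sm (f j))
    (i : Fin n) :
    Dd i (fun x => ∑ j ∈ s, f j x) = fun x => ∑ j ∈ s, Dd i (f j) x := by
  funext x
  unfold Dd
  rw [fderiv_fun_sum (fun j _ => (hf j).diff x)]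
  simp

lemma dd_const_mul {n : ℕ} {f : EE n → ℝ} (hf : Sm f) (c : ℝ) (i : Fin n) :
    Dd i (fun x => c * f x) = fun x => c * Dd i f x := by
  funext x
  unfold Dd
  rw [fderiv_const_mul (hf.diff x)]
  simp

lemma dd_pow {n : ℕ} {f : EE n → ℝ} (hf : Sm f) (m : ℕ) (i : Fin n) :
    Dd i (fun x => f x ^ (m + 1)) = fun x => ((m : ℝ) + 1) * (f x ^ m * Dd i f x) := by
  funext x
  unfold Dd
  rw [fderiv_fun_pow (m + 1) (hf.diff x)]
  simp
  ring

lemma dd_comm {n : ℕ} {f : EE n → ℝ} (hf : Sm f) (i j : Fin n) :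
    Dd i (Dd j f) = Dd j (Dd i f) := by
  funext x
  have hd : DifferentiableAt ℝ (fderiv ℝ f) x :=
    ((hf.fderiv_right (m := (⊤ : ℕ∞)) (by simp)).differentiable (by simp)) x
  have key : ∀ a b : Fin n, Dd a (Dd b f) x =
      fderiv ℝ (fderiv ℝ f) x (EuclideanSpace.single a 1) (EuclideanSpace.single b 1) := by
    intro a b
    unfold Dd
    rw [fderiv_clm_apply hd (by fun_prop)]
    simp
  rw [key, key]
  have hs : IsSymmSndFDerivAt ℝ f x := by
    apply ContDiffAt.isSymmSndFDerivAt (n := (⊤ : ℕ∞)) hf.contDiffAt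
    simp only [minSmoothness_of_isRCLikeNormedField]
    exact WithTop.coe_le_coe.mpr le_top
  exact hs _ _

lemma lap_eq {n : ℕ} {f : EE n → ℝ} (hf : Sm f) :
    laplacian f = fun x => ∑ i, Dd i (Dd i f) x := by
  funext x
  have hd : DifferentiableAt ℝ (fderiv ℝ f) x :=
    ((hf.fderiv_right (m := (⊤ : ℕ∞)) (by simp)).differentiable (by simp)) x
  unfold laplacian
  refine Finset.sum_congr rfl fun i _ => ?_
  rw [iteratedFDeriv_two_apply]
  unfold Dd
  rw [fderiv_clm_apply hd (by fun_prop)]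
  simp

lemma Sm.lap {n : ℕ} {f : EE n → ℝ} (hf : Sm f) : Sm (laplacian f) := by
  rw [lap_eq hf]
  exact ContDiff.sum fun i _ => (hf.dd i).dd i

lemma grad_sq {n : ℕ} (f : EE n → ℝ) (x : EE n) :
    ‖gradient f x‖ ^ 2 = ∑ j, (Dd j f x) ^ 2 := by
  rw [EuclideanSpace.real_norm_sq_eq]
  refine Finset.sum_congr rfl fun i _ => ?_
  congr 1
  have : inner ℝ (gradient f x) (EuclideanSpace.single i (1:ℝ)) = Dd i f x := by
    unfold gradient Dd
    simp
  rw [← this, EuclideanSpace.inner_single_right]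
  simp

lemma dd_cs {n : ℕ} {f : EE n → ℝ} (hf : HasCompactSupport f) (i : Fin n) :
    HasCompactSupport (Dd i f) := by
  have := hf.fderiv (𝕜 := ℝ)
  exact this.comp_left (g := fun L : EE n →L[ℝ] ℝ => L (EuclideanSpace.single i 1)) (by simp)

lemma int_cs {n : ℕ} {f : EE n → ℝ} (hf : Continuous f) (h : HasCompactSupport f) :
    Integrable f := hf.integrable_of_hasCompactSupport h

lemma ibp {n : ℕ} {f g : EE n → ℝ} (hf : Sm f) (hg : Sm g) (hc : HasCompactSupport g)
    (i : Fin n) : ∫ x, f x * Dd i g x = - ∫ x, Dd i f x * g x := by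
  have := integral_mul_fderiv_eq_neg_fderiv_mul_of_integrable (μ := (volume : Measure (EE n)))
    (f := f) (g := g) (v := EuclideanSpace.single i (1:ℝ)) ?_ ?_ ?_ (fun x _ => hf.diff x)
    (fun x _ => hg.diff x)
  · exact this
  · exact int_cs ((hf.dd i).continuous.mul hg.continuous) hc.mul_left
  · exact int_cs (hf.continuous.mul (hg.dd i).continuous) (dd_cs hc i).mul_left
  · exact int_cs (hf.continuous.mul hg.continuous) hc.mul_left

lemma int_dd {n : ℕ} {g : EE n → ℝ} (hg : Sm g) (hc : HasCompactSupport g)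
    (i : Fin n) : ∫ x, Dd i g x = 0 := by
  have := ibp (f := fun _ => (1:ℝ)) contDiff_const hg hc i
  simpa [Dd] using this

lemma lap_cs {n : ℕ} {f : EE n → ℝ} (hf : HasCompactSupport f) :
    HasCompactSupport (laplacian f) := by
  have h : tsupport (laplacian f) ⊆ tsupport f := by
    apply closure_minimal _ (isClosed_tsupport f)
    intro x hx
    by_contra hxf
    apply hx
    have h0 : f =ᶠ[nhds x] fun _ => 0 := notMem_tsupport_iff_eventuallyEq.mp hxf
    unfold laplacian
    have := h0.iteratedFDeriv ℝ 2
    rw [this.self_of_nhds]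
    simp
  exact hf.of_isClosed_subset (isClosed_tsupport _) h

/-- the energy form of `f` and a test function -/
lemma form_eq {n : ℕ} {f g : EE n → ℝ} (hf : Sm f) (hg : Sm g) (hc : HasCompactSupport g) :
    ∫ x, ∑ j, Dd j (laplacian f) x * Dd j (laplacian g) x
      = - ∫ x, laplacian (laplacian (laplacian f)) x * g x := by
  have hcl := lap_cs hc
  have e1 : ∫ x, ∑ j, Dd j (laplacian f) x * Dd j (laplacian g) x
      = - ∫ x, laplacian (laplacian f) x * laplacian g x := by
    rw [integral_finsetSum]
    · simp_rw [ibp (hf.lap.dd _) hg.lap hcl]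
      rw [lap_eq hf.lap, Finset.sum_neg_distrib, ← integral_finsetSum]
      · simp_rw [Finset.sum_mul]
      · intro i _
        exact int_cs (((hf.lap.dd i).dd i).continuous.mul hg.lap.continuous) hcl.mul_left
    · intro i _
      exact int_cs ((hf.lap.dd i).continuous.mul (hg.lap.dd i).continuous) (dd_cs hcl i).mul_left
  rw [e1]
  congr 1
  have hF := hf.lap.lap
  rw [lap_eq hF, lap_eq hg]
  simp_rw [Finset.mul_sum, Finset.sum_mul]
  rw [integral_finsetSum, integral_finsetSum]
  · refine Finset.sum_congr rfl fun i _ => ?_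
    rw [ibp hF (hg.dd i) (dd_cs hc i), ibp (hF.dd i) hg hc, neg_neg]
  · intro i _
    exact int_cs (((hF.dd i).dd i).continuous.mul hg.continuous) hc.mul_left
  · intro i _
    exact int_cs (hF.continuous.mul ((hg.dd i).dd i).continuous) (dd_cs (dd_cs hc i) i).mul_left


/-- Cutoff data at scale `1/r`. -/
structure Cut {n : ℕ} (ζ : EE n → ℝ) (r : ℝ) : Prop where
  sm : Sm ζ
  cs : HasCompactSupport ζ
  nn : ∀ x, 0 ≤ ζ x
  le : ∀ x, ζ x ≤ 1
  rpos : 0 < r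
  d1 : ∀ x i, |Dd i ζ x| ≤ r
  d2 : ∀ x i j, |Dd j (Dd i ζ) x| ≤ r ^ 2
  d3 : ∀ x i j l, |Dd l (Dd j (Dd i ζ)) x| ≤ r ^ 3

lemma Cut.pow_sm {n : ℕ} {ζ : EE n → ℝ} {r : ℝ} (h : Cut ζ r) (m : ℕ) :
    Sm (fun x => ζ x ^ m) := h.sm.pow m

lemma Cut.pow_cs {n : ℕ} {ζ : EE n → ℝ} {r : ℝ} (h : Cut ζ r) (m : ℕ) :
    HasCompactSupport (fun x => ζ x ^ (m + 1)) :=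
  h.cs.comp_left (g := fun t : ℝ => t ^ (m + 1)) (by simp)

lemma Cut.pow_d1 {n : ℕ} {ζ : EE n → ℝ} {r : ℝ} (h : Cut ζ r) (m : ℕ) (x : EE n) (i : Fin n) :
    |Dd i (fun x => ζ x ^ (m + 1)) x| ≤ ((m : ℝ) + 1) * (r * ζ x ^ m) := by
  rw [dd_pow h.sm]
  have h0 := h.nn x
  simp only [abs_mul, abs_pow, abs_of_nonneg h0]
  rw [abs_of_nonneg (by positivity : (0:ℝ) ≤ (m:ℝ) + 1), mul_comm r]
  gcongr
  exact h.d1 x i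

lemma Cut.pow_d2 {n : ℕ} {ζ : EE n → ℝ} {r : ℝ} (h : Cut ζ r) (k : ℕ) (x : EE n) (i j : Fin n) :
    |Dd j (Dd i (fun x => ζ x ^ (k + 2))) x| ≤ ((k : ℝ) + 2) ^ 2 * (r ^ 2 * ζ x ^ k) := by
  have h0 := h.nn x
  have h1 := h.le x
  have hr := h.rpos.le
  have e : Dd j (Dd i (fun x => ζ x ^ (k + 1 + 1))) x =
      ((k : ℝ) + 2) * (ζ x ^ (k+1) * Dd j (Dd i ζ) x
        + ((k : ℝ) + 1) * (ζ x ^ k * Dd j ζ x) * Dd i ζ x) := by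
    rw [dd_pow h.sm, dd_const_mul ((h.pow_sm _).mul (h.sm.dd i)),
      dd_mul (h.pow_sm _) (h.sm.dd i), dd_pow h.sm]
    push_cast
    ring
  rw [show k + 2 = k + 1 + 1 from rfl, e]
  have a1 : |ζ x ^ (k+1) * Dd j (Dd i ζ) x| ≤ ζ x ^ k * r ^ 2 := by
    rw [abs_mul, abs_of_nonneg (pow_nonneg h0 _)]
    exact mul_le_mul (pow_le_pow_of_le_one h0 h1 (by omega)) (h.d2 x i j) (abs_nonneg _)
      (pow_nonneg h0 _)
  have a2 : |((k : ℝ) + 1) * (ζ x ^ k * Dd j ζ x) * Dd i ζ x| ≤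
      ((k : ℝ) + 1) * (ζ x ^ k * r) * r := by
    simp only [abs_mul, abs_pow, abs_of_nonneg h0]
    rw [abs_of_nonneg (by positivity : (0:ℝ) ≤ (k:ℝ) + 1)]
    gcongr
    · exact h.d1 x j
    · exact h.d1 x i
  rw [abs_mul, abs_of_nonneg (by positivity : (0:ℝ) ≤ (k:ℝ) + 2)]
  calc _ ≤ ((k : ℝ) + 2) * (ζ x ^ k * r ^ 2 + ((k : ℝ) + 1) * (ζ x ^ k * r) * r) := by
        gcongr
        exact (abs_add_le _ _).trans (add_le_add a1 a2)
    _ = _ := by ring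

lemma Cut.pow_d3 {n : ℕ} {ζ : EE n → ℝ} {r : ℝ} (h : Cut ζ r) (k : ℕ) (x : EE n)
    (i j l : Fin n) :
    |Dd l (Dd j (Dd i (fun x => ζ x ^ (k + 3)))) x| ≤ ((k : ℝ) + 3) ^ 3 * (r ^ 3 * ζ x ^ k) := by
  have h0 := h.nn x
  have h1 := h.le x
  have hr := h.rpos.le
  have e : Dd l (Dd j (Dd i (fun x => ζ x ^ (k + 2 + 1)))) x =
      ((k : ℝ) + 3) * (ζ x ^ (k+2) * Dd l (Dd j (Dd i ζ)) x
        + Dd l (fun x => ζ x ^ (k + 2)) x * Dd j (Dd i ζ) x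
        + Dd j (fun x => ζ x ^ (k + 2)) x * Dd l (Dd i ζ) x
        + Dd l (Dd j (fun x => ζ x ^ (k + 2))) x * Dd i ζ x) := by
    have s := h.pow_sm (k+2)
    rw [dd_pow h.sm, dd_const_mul (s.mul (h.sm.dd i)),
      dd_mul s (h.sm.dd i), dd_const_mul ((s.mul ((h.sm.dd i).dd j)).add
        ((s.dd j).mul (h.sm.dd i))), dd_add (s.mul ((h.sm.dd i).dd j))
        ((s.dd j).mul (h.sm.dd i)), dd_mul s ((h.sm.dd i).dd j), dd_mul (s.dd j) (h.sm.dd i)]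
    push_cast
    ring
  rw [show k + 3 = k + 2 + 1 from rfl, e]
  have hp : ∀ m, 0 ≤ ζ x ^ m := fun m => pow_nonneg h0 _
  have a1 : |ζ x ^ (k+2) * Dd l (Dd j (Dd i ζ)) x| ≤ ζ x ^ k * r ^ 3 := by
    rw [abs_mul, abs_of_nonneg (hp _)]
    exact mul_le_mul (pow_le_pow_of_le_one h0 h1 (by omega)) (h.d3 x i j l) (abs_nonneg _)
      (hp _)
  have b : ∀ l, |Dd l (fun x => ζ x ^ (k + 2)) x| ≤ ((k : ℝ) + 2) * (r * ζ x ^ k) := by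
    intro l
    have := h.pow_d1 (k+1) x l
    push_cast at this
    refine this.trans ?_
    rw [show (k:ℝ)+1+1 = k + 2 by ring]
    gcongr ((k : ℝ) + 2) * (r * ?_)
    exact pow_le_pow_of_le_one h0 h1 (by omega)
  have a2 : ∀ l j, |Dd l (fun x => ζ x ^ (k + 2)) x * Dd j (Dd i ζ) x|
      ≤ ((k : ℝ) + 2) * (r * ζ x ^ k) * r ^ 2 := by
    intro l j
    rw [abs_mul]
    exact mul_le_mul (b l) (h.d2 x i j) (abs_nonneg _) (by positivity)
  have a3 : |Dd l (Dd j (fun x => ζ x ^ (k + 2))) x * Dd i ζ x| ≤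
      ((k : ℝ) + 2) ^ 2 * (r ^ 2 * ζ x ^ k) * r := by
    rw [abs_mul]
    exact mul_le_mul (h.pow_d2 k x j l) (h.d1 x i) (abs_nonneg _) (by positivity)
  rw [abs_mul, abs_of_nonneg (by positivity : (0:ℝ) ≤ (k:ℝ) + 3)]
  calc _ ≤ ((k : ℝ) + 3) * (ζ x ^ k * r ^ 3 + ((k : ℝ) + 2) * (r * ζ x ^ k) * r ^ 2
        + ((k : ℝ) + 2) * (r * ζ x ^ k) * r ^ 2 + ((k : ℝ) + 2) ^ 2 * (r ^ 2 * ζ x ^ k) * r) := by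
        gcongr
        exact (abs_add_le _ _).trans (add_le_add ((abs_add_le _ _).trans
          (add_le_add ((abs_add_le _ _).trans (add_le_add a1 (a2 l j))) (a2 j l))) a3)
    _ = _ := by ring

/-- Hessian squared -/
def Hs {n : ℕ} (f : EE n → ℝ) (x : EE n) : ℝ := ∑ i, ∑ j, (Dd j (Dd i f) x) ^ 2
/-- gradient squared -/
def Gs {n : ℕ} (f : EE n → ℝ) (x : EE n) : ℝ := ∑ i, (Dd i f x) ^ 2
/-- gradient of laplacian squared -/
def Ps {n : ℕ} (f : EE n → ℝ) (x : EE n) : ℝ := ∑ j, (Dd j (laplacian f) x) ^ 2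

lemma Hs_nn {n : ℕ} (f : EE n → ℝ) (x : EE n) : 0 ≤ Hs f x :=
  Finset.sum_nonneg fun _ _ => Finset.sum_nonneg fun _ _ => sq_nonneg _
lemma Gs_nn {n : ℕ} (f : EE n → ℝ) (x : EE n) : 0 ≤ Gs f x :=
  Finset.sum_nonneg fun _ _ => sq_nonneg _
lemma Ps_nn {n : ℕ} (f : EE n → ℝ) (x : EE n) : 0 ≤ Ps f x :=
  Finset.sum_nonneg fun _ _ => sq_nonneg _

lemma Hs_cont {n : ℕ} {f : EE n → ℝ} (hf : Sm f) : Continuous (Hs f) :=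
  continuous_finsetSum _ fun i _ => continuous_finsetSum _ fun j _ =>
    (((hf.dd i).dd j).continuous).pow 2
lemma Gs_cont {n : ℕ} {f : EE n → ℝ} (hf : Sm f) : Continuous (Gs f) :=
  continuous_finsetSum _ fun i _ => ((hf.dd i).continuous).pow 2
lemma Ps_cont {n : ℕ} {f : EE n → ℝ} (hf : Sm f) : Continuous (Ps f) :=
  continuous_finsetSum _ fun i _ => ((hf.lap.dd i).continuous).pow 2

lemma le_Hs {n : ℕ} (f : EE n → ℝ) (x : EE n) (i j : Fin n) :
    |Dd j (Dd i f) x| ≤ √(Hs f x) := by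
  apply Real.abs_le_sqrt
  have h1 := Finset.single_le_sum (f := fun j => (Dd j (Dd i f) x) ^ 2)
    (fun _ _ => sq_nonneg _) (Finset.mem_univ j)
  have h2 := Finset.single_le_sum (f := fun i => ∑ j, (Dd j (Dd i f) x) ^ 2)
    (fun _ _ => Finset.sum_nonneg fun _ _ => sq_nonneg _) (Finset.mem_univ i)
  exact h1.trans h2

lemma le_Gs {n : ℕ} (f : EE n → ℝ) (x : EE n) (i : Fin n) :
    |Dd i f x| ≤ √(Gs f x) := by
  apply Real.abs_le_sqrt
  exact Finset.single_le_sum (f := fun j => (Dd j f x) ^ 2)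
    (fun _ _ => sq_nonneg _) (Finset.mem_univ i)

lemma dlap_mul {n : ℕ} {f η : EE n → ℝ} (hf : Sm f) (hη : Sm η) (j : Fin n) (x : EE n) :
    Dd j (laplacian (fun x => f x * η x)) x = η x * Dd j (laplacian f) x +
      ∑ i, (Dd j η x * Dd i (Dd i f) x + 2 * (Dd j (Dd i f) x * Dd i η x)
        + 2 * (Dd i f x * Dd j (Dd i η) x) + Dd j f x * Dd i (Dd i η) x
        + f x * Dd j (Dd i (Dd i η)) x) := by
  rw [lap_eq (hf.mul hη), lap_eq hf]
  have e : ∀ i, Dd i (Dd i (fun x => f x * η x)) = fun x =>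
      f x * Dd i (Dd i η) x + Dd i f x * Dd i η x
        + (Dd i f x * Dd i η x + Dd i (Dd i f) x * η x) := by
    intro i
    rw [dd_mul hf hη, dd_add (hf.mul (hη.dd i)) ((hf.dd i).mul hη), dd_mul hf (hη.dd i),
      dd_mul (hf.dd i) hη]
  simp_rw [e]
  have s1 : ∀ i, Sm (fun x => f x * Dd i (Dd i η) x) := fun i => hf.mul ((hη.dd i).dd i)
  have s2 : ∀ i, Sm (fun x => Dd i f x * Dd i η x) := fun i => (hf.dd i).mul (hη.dd i)
  have s3 : ∀ i, Sm (fun x => Dd i (Dd i f) x * η x) := fun i => ((hf.dd i).dd i).mul hη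
  rw [dd_sum _ (fun i => ((s1 i).add (s2 i)).add ((s2 i).add (s3 i))),
    dd_sum _ (fun i => ((hf.dd i).dd i)), Finset.mul_sum, ← Finset.sum_add_distrib]
  refine Finset.sum_congr rfl fun i _ => ?_
  rw [dd_add ((s1 i).add (s2 i)) ((s2 i).add (s3 i)), dd_add (s1 i) (s2 i), dd_add (s2 i) (s3 i),
    dd_mul hf ((hη.dd i).dd i), dd_mul (hf.dd i) (hη.dd i), dd_mul ((hf.dd i).dd i) hη]
  ring

/-- lower order density -/
def Ws {n : ℕ} (f ζ : EE n → ℝ) (r : ℝ) (k : ℕ) (x : EE n) : ℝ :=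
  r ^ 2 * ζ x ^ (2 * k + 4) * Hs f x + r ^ 4 * ζ x ^ (2 * k + 2) * Gs f x
    + r ^ 6 * ζ x ^ (2 * k) * f x ^ 2

lemma rest_bound (n k : ℕ) : ∃ C : ℝ, 0 < C ∧ ∀ (f ζ : EE n → ℝ) (r : ℝ), Sm f → Cut ζ r →
    ∀ x, ∑ j, (Dd j (laplacian (fun x => f x * ζ x ^ (k + 3))) x
      - ζ x ^ (k + 3) * Dd j (laplacian f) x) ^ 2 ≤ C * Ws f ζ r k x := by
  refine ⟨n * (27 * (n * ((k:ℝ) + 3) ^ 3) ^ 2) + 1, by positivity, ?_⟩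
  intro f ζ r hf h x
  have h0 := h.nn x
  have h1 := h.le x
  have hr := h.rpos.le
  set B : ℝ := ((k:ℝ) + 3) ^ 3 with hB
  set a : ℝ := r * ζ x ^ (k + 2) * √(Hs f x) with ha
  set b : ℝ := r ^ 2 * ζ x ^ (k + 1) * √(Gs f x) with hb
  set c : ℝ := r ^ 3 * ζ x ^ k * |f x| with hc
  have a0 : 0 ≤ a := by positivity
  have b0 : 0 ≤ b := by positivity
  have c0 : 0 ≤ c := by positivity
  have B0 : 0 ≤ B := by positivity
  have hk1 : (1:ℝ) ≤ (k:ℝ) + 3 := by linarith [(Nat.cast_nonneg k : (0:ℝ) ≤ k)]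
  have hW : Ws f ζ r k x = a ^ 2 + b ^ 2 + c ^ 2 := by
    simp only [Ws, ha, hb, hc, mul_pow, Real.sq_sqrt (Hs_nn f x), Real.sq_sqrt (Gs_nn f x),
      sq_abs]
    ring
  have t1 : ∀ i, |Dd i (fun x => ζ x ^ (k + 3)) x| ≤ B * (r * ζ x ^ (k+2)) := by
    intro i
    refine (h.pow_d1 (k+2) x i).trans ?_
    push_cast
    gcongr
    rw [show (k:ℝ) + 2 + 1 = k + 3 by ring]
    exact le_self_pow₀ hk1 (by norm_num)
  have t2 : ∀ i j, |Dd j (Dd i (fun x => ζ x ^ (k + 3))) x| ≤ B * (r ^ 2 * ζ x ^ (k+1)) := by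
    intro i j
    refine (h.pow_d2 (k+1) x i j).trans ?_
    push_cast
    gcongr
    rw [show (k:ℝ) + 1 + 2 = k + 3 by ring]
    exact pow_le_pow_right₀ hk1 (by norm_num)
  have t3 : ∀ i j l, |Dd l (Dd j (Dd i (fun x => ζ x ^ (k + 3)))) x| ≤ B * (r ^ 3 * ζ x ^ k) :=
    fun i j l => h.pow_d3 k x i j l
  have key : ∀ j, |Dd j (laplacian (fun x => f x * ζ x ^ (k + 3))) x
      - ζ x ^ (k + 3) * Dd j (laplacian f) x| ≤ n * (3 * B * (a + b + c)) := by
    intro j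
    rw [dlap_mul hf (h.pow_sm (k+3)), add_sub_cancel_left]
    refine (Finset.abs_sum_le_sum_abs _ _).trans ?_
    have : (n:ℝ) * (3 * B * (a + b + c)) = ∑ i : Fin n, (3 * B * (a + b + c)) := by simp
    rw [this]
    refine Finset.sum_le_sum fun i _ => ?_
    have m : ∀ {p q P Q : ℝ}, |p| ≤ P → |q| ≤ Q → |p * q| ≤ P * Q := by
      intro p q P Q h1 h2
      rw [abs_mul]
      exact mul_le_mul h1 h2 (abs_nonneg _) ((abs_nonneg _).trans h1)
    have u1 := m (t1 j) (le_Hs f x i i)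
    have u2 := m (le_Hs f x i j) (t1 i)
    have u3 := m (le_Gs f x i) (t2 i j)
    have u4 := m (le_Gs f x j) (t2 i i)
    have u5 := m (le_refl |f x|) (t3 i i j)
    have v1 : B * (r * ζ x ^ (k+2)) * √(Hs f x) = B * a := by rw [ha]; ring
    have v2 : √(Hs f x) * (B * (r * ζ x ^ (k+2))) = B * a := by rw [ha]; ring
    have v3 : √(Gs f x) * (B * (r ^ 2 * ζ x ^ (k+1))) = B * b := by rw [hb]; ring
    have v5 : |f x| * (B * (r ^ 3 * ζ x ^ k)) = B * c := by rw [hc]; ring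
    rw [v1] at u1; rw [v2] at u2; rw [v3] at u3 u4; rw [v5] at u5
    have hBc := mul_nonneg B0 c0
    rw [show 3 * B * (a + b + c) = 3 * (B * a) + 3 * (B * b) + 3 * (B * c) by ring]
    have w1 := abs_le.mp u1
    have w2 := abs_le.mp u2
    have w3 := abs_le.mp u3
    have w4 := abs_le.mp u4
    have w5 := abs_le.mp u5
    rw [abs_le]
    constructor
    · linarith [w1.1, w2.1, w3.1, w4.1, w5.1]
    · linarith [w1.2, w2.2, w3.2, w4.2, w5.2]
  have key2 : ∀ j, (Dd j (laplacian (fun x => f x * ζ x ^ (k + 3))) x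
      - ζ x ^ (k + 3) * Dd j (laplacian f) x) ^ 2 ≤ 27 * (n * B) ^ 2 * (a ^ 2 + b ^ 2 + c ^ 2) := by
    intro j
    have := sq_le_sq' (abs_le.mp (key j)).1 (abs_le.mp (key j)).2
    refine this.trans ?_
    have e : (a + b + c) ^ 2 ≤ 3 * (a ^ 2 + b ^ 2 + c ^ 2) := by
      nlinarith [sq_nonneg (a - b), sq_nonneg (b - c), sq_nonneg (a - c)]
    calc _ = 9 * (n * B) ^ 2 * (a + b + c) ^ 2 := by ring
      _ ≤ 9 * (n * B) ^ 2 * (3 * (a ^ 2 + b ^ 2 + c ^ 2)) := by gcongr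
      _ = _ := by ring
  rw [hW]
  refine (Finset.sum_le_sum fun j _ => key2 j).trans ?_
  rw [Finset.sum_const, Finset.card_univ, Fintype.card_fin, nsmul_eq_mul]
  nlinarith [sq_nonneg a, sq_nonneg b, sq_nonneg c]


/-- density of order two -/
def Aw {n : ℕ} (f ζ : EE n → ℝ) (r : ℝ) (k : ℕ) (x : EE n) : ℝ :=
  r ^ 2 * ζ x ^ (2 * k + 4) * Hs f x
/-- density of order one -/
def Bw {n : ℕ} (f ζ : EE n → ℝ) (r : ℝ) (k : ℕ) (x : EE n) : ℝ :=
  r ^ 4 * ζ x ^ (2 * k + 2) * Gs f x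
/-- density of order zero -/
def Cw {n : ℕ} (f ζ : EE n → ℝ) (r : ℝ) (k : ℕ) (x : EE n) : ℝ :=
  r ^ 6 * ζ x ^ (2 * k) * f x ^ 2
/-- density of order three -/
def Dw {n : ℕ} (f ζ : EE n → ℝ) (k : ℕ) (x : EE n) : ℝ :=
  ζ x ^ (2 * k + 6) * Ps f x

lemma Cut.pow_cs' {n : ℕ} {ζ : EE n → ℝ} {r : ℝ} (h : Cut ζ r) {m : ℕ} (hm : m ≠ 0) :
    HasCompactSupport (fun x => ζ x ^ m) :=
  h.cs.comp_left (g := fun t : ℝ => t ^ m) (by simp [hm])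

lemma wint {n : ℕ} {ζ : EE n → ℝ} {r : ℝ} (h : Cut ζ r) {m : ℕ} (hm : m ≠ 0) (c : ℝ)
    {g : EE n → ℝ} (hg : Continuous g) : Integrable (fun x => c * ζ x ^ m * g x) := by
  apply int_cs
  · exact (continuous_const.mul (h.pow_sm m).continuous).mul hg
  · exact ((h.pow_cs' hm).mul_left (f := fun _ => c)).mul_right

lemma Aw_int {n k : ℕ} {f ζ : EE n → ℝ} {r : ℝ} (h : Cut ζ r) (hf : Sm f) :
    Integrable (Aw f ζ r k) := wint h (by omega) _ (Hs_cont hf)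
lemma Bw_int {n k : ℕ} {f ζ : EE n → ℝ} {r : ℝ} (h : Cut ζ r) (hf : Sm f) :
    Integrable (Bw f ζ r k) := wint h (by omega) _ (Gs_cont hf)
lemma Cw_int {n k : ℕ} (hk : k ≠ 0) {f ζ : EE n → ℝ} {r : ℝ} (h : Cut ζ r) (hf : Sm f) :
    Integrable (Cw f ζ r k) := wint h (by omega) _ (hf.continuous.pow 2)
lemma Dw_int {n k : ℕ} {f ζ : EE n → ℝ} {r : ℝ} (h : Cut ζ r) (hf : Sm f) :
    Integrable (Dw f ζ k) := by
  have := wint h (m := 2 * k + 6) (by omega) 1 (Ps_cont hf)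
  simp only [one_mul] at this
  exact this

lemma div_lemma {n : ℕ} {F : Fin n → EE n → ℝ} (c : ℝ) (hF : ∀ i, Sm (F i))
    (hc : ∀ i, HasCompactSupport (F i)) :
    Integrable (fun x => c * ∑ i, Dd i (F i) x) ∧ ∫ x, c * ∑ i, Dd i (F i) x = 0 := by
  have hi : ∀ i ∈ Finset.univ, Integrable (fun x => Dd i (F i) x) := fun i _ =>
    int_cs ((hF i).dd i).continuous (dd_cs (hc i) i)
  constructor
  · exact (integrable_finsetSum _ hi).const_mul c
  · rw [integral_const_mul, integral_finsetSum _ hi]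
    simp [int_dd (hF _) (hc _)]

lemma abs_mul_le {p q P Q : ℝ} (h1 : |p| ≤ P) (h2 : |q| ≤ Q) : |p * q| ≤ P * Q := by
  rw [abs_mul]
  exact mul_le_mul h1 h2 (abs_nonneg _) ((abs_nonneg _).trans h1)

lemma interp1 (n k : ℕ) (hk : k ≠ 0) (δ : ℝ) (hδ : 0 < δ) : ∃ C : ℝ, 0 < C ∧
    ∀ (f ζ : EE n → ℝ) (r : ℝ), Sm f → Cut ζ r →
    (∫ x, Bw f ζ r k x) ≤ δ * (∫ x, Aw f ζ r k x) + C * (∫ x, Cw f ζ r k x) := by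
  set K : ℝ := 2 * (k:ℝ) + 2 with hK
  refine ⟨2 * ((n:ℝ) ^ 2 / (2 * δ) + (n * K) ^ 2 / 2) + 1, by positivity, ?_⟩
  intro f ζ r hf h
  have hr := h.rpos.le
  have sF : ∀ i, Sm (fun x => f x * Dd i f x * ζ x ^ (2 * k + 2)) := fun i =>
    (hf.mul (hf.dd i)).mul (h.pow_sm _)
  obtain ⟨d1, d2⟩ := div_lemma (F := fun i x => f x * Dd i f x * ζ x ^ (2 * k + 2)) (r ^ 4) sF
    (fun i => (h.pow_cs' (by omega)).mul_left)
  have pt : ∀ x, Bw f ζ r k x ≤ r ^ 4 * ∑ i, Dd i (fun x => f x * Dd i f x * ζ x ^ (2 * k + 2)) x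
      + δ / 2 * Aw f ζ r k x + ((n:ℝ) ^ 2 / (2 * δ) + (n * K) ^ 2 / 2) * Cw f ζ r k x
      + 1 / 2 * Bw f ζ r k x := by
    intro x
    have h0 := h.nn x
    set a : ℝ := r * ζ x ^ (k + 2) * √(Hs f x) with ha
    set b : ℝ := r ^ 2 * ζ x ^ (k + 1) * √(Gs f x) with hb
    set c : ℝ := r ^ 3 * ζ x ^ k * |f x| with hc
    have eA : Aw f ζ r k x = a ^ 2 := by
      simp only [Aw, ha, mul_pow, Real.sq_sqrt (Hs_nn f x)]; ring
    have eB : Bw f ζ r k x = b ^ 2 := by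
      simp only [Bw, hb, mul_pow, Real.sq_sqrt (Gs_nn f x)]; ring
    have eC : Cw f ζ r k x = c ^ 2 := by
      simp only [Cw, hc, mul_pow, sq_abs]; ring
    have e : ∀ i, Dd i (fun x => f x * Dd i f x * ζ x ^ (2 * k + 2)) x =
        ζ x ^ (2 * k + 2) * (Dd i f x) ^ 2 + (f x * Dd i (Dd i f) x * ζ x ^ (2 * k + 2)
         + f x * Dd i f x * Dd i (fun x => ζ x ^ (2 * k + 2)) x) := by
      intro i
      rw [dd_mul (hf.mul (hf.dd i)) (h.pow_sm _), dd_mul hf (hf.dd i)]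
      ring
    have e2 : Bw f ζ r k x = r ^ 4 * ∑ i, Dd i (fun x => f x * Dd i f x * ζ x ^ (2 * k + 2)) x
        - ∑ i, r ^ 4 * (f x * Dd i (Dd i f) x * ζ x ^ (2 * k + 2)
         + f x * Dd i f x * Dd i (fun x => ζ x ^ (2 * k + 2)) x) := by
      simp_rw [e]
      rw [Finset.sum_add_distrib, ← Finset.mul_sum, ← Finset.mul_sum]
      unfold Bw Gs
      ring
    have e3 : -∑ i, r ^ 4 * (f x * Dd i (Dd i f) x * ζ x ^ (2 * k + 2)
         + f x * Dd i f x * Dd i (fun x => ζ x ^ (2 * k + 2)) x) ≤ n * (c * a + K * (c * b)) := by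
      refine (neg_le_abs _).trans ((Finset.abs_sum_le_sum_abs _ _).trans ?_)
      have : (n:ℝ) * (c * a + K * (c * b)) = ∑ i : Fin n, (c * a + K * (c * b)) := by
        simp only [Finset.sum_const, Finset.card_univ, Fintype.card_fin, nsmul_eq_mul]
      rw [this]
      refine Finset.sum_le_sum fun i _ => ?_
      have p1 := abs_mul_le (abs_mul_le (le_refl |f x|) (le_Hs f x i i))
        (abs_of_nonneg (pow_nonneg h0 (2*k+2))).le
      have p2 := abs_mul_le (abs_mul_le (le_refl |f x|) (le_Gs f x i)) (h.pow_d1 (2*k+1) x i)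
      push_cast at p2
      rw [abs_mul, abs_of_nonneg (by positivity : 0 ≤ r ^ 4)]
      refine (mul_le_mul_of_nonneg_left ((abs_add_le _ _).trans (add_le_add p1 p2))
        (by positivity)).trans (le_of_eq ?_)
      rw [ha, hb, hc, hK]
      ring
    rw [eA, eB, eC] at *
    have y1 : n * (c * a) ≤ δ / 2 * a ^ 2 + (n:ℝ) ^ 2 / (2 * δ) * c ^ 2 := by
      have : δ / 2 * a ^ 2 + (n:ℝ) ^ 2 / (2 * δ) * c ^ 2 - n * (c * a)
        = (δ * a - n * c) ^ 2 / (2 * δ) := by field_simp; ring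
      have : 0 ≤ (δ * a - n * c) ^ 2 / (2 * δ) := by positivity
      linarith
    have y2 : n * (K * (c * b)) ≤ 1 / 2 * b ^ 2 + (n * K) ^ 2 / 2 * c ^ 2 := by
      nlinarith [sq_nonneg (b - n * K * c)]
    linarith
  have iA := Aw_int (k := k) h hf
  have iB := Bw_int (k := k) h hf
  have iC := Cw_int hk h hf
  have := integral_mono iB (((d1.add (iA.const_mul (δ/2))).add
    (iC.const_mul ((n:ℝ) ^ 2 / (2 * δ) + (n * K) ^ 2 / 2))).add (iB.const_mul (1/2))) pt
  simp only [Pi.add_apply] at this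
  rw [integral_add, integral_add, integral_add, d2, integral_const_mul, integral_const_mul,
    integral_const_mul] at this
  · have hc0 : 0 ≤ (∫ x, Cw f ζ r k x) := by
      apply integral_nonneg
      intro x
      have := h.nn x
      simp only [Cw, Pi.zero_apply]
      positivity
    linarith
  · exact d1
  · exact iA.const_mul _
  · exact d1.add (iA.const_mul _)
  · exact iC.const_mul _
  · exact (d1.add (iA.const_mul _)).add (iC.const_mul _)
  · exact iB.const_mul _

lemma interp2 (n k : ℕ) (δ : ℝ) (hδ : 0 < δ) : ∃ C : ℝ, 0 < C ∧
    ∀ (f ζ : EE n → ℝ) (r : ℝ), Sm f → Cut ζ r →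
    (∫ x, Aw f ζ r k x) ≤ δ * (∫ x, Dw f ζ k x) + C * (∫ x, Bw f ζ r k x) := by
  set K : ℝ := 2 * (k:ℝ) + 4 with hK
  refine ⟨2 * ((n:ℝ) ^ 2 / (2 * δ) + ((n:ℝ) ^ 2 * K) ^ 2 / 2) + 1, by positivity, ?_⟩
  intro f ζ r hf h
  have hr := h.rpos.le
  have sF0 : ∀ i j, Sm (fun x => Dd i f x * Dd j (Dd i f) x * ζ x ^ (2 * k + 4)) := fun i j =>
    ((hf.dd i).mul ((hf.dd i).dd j)).mul (h.pow_sm _)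
  have sF : ∀ j, Sm (fun x => ∑ i, Dd i f x * Dd j (Dd i f) x * ζ x ^ (2 * k + 4)) := fun j =>
    ContDiff.sum fun i _ => sF0 i j
  obtain ⟨d1, d2⟩ := div_lemma
    (F := fun j x => ∑ i, Dd i f x * Dd j (Dd i f) x * ζ x ^ (2 * k + 4)) (r ^ 2) sF
    (fun j => by
      simp_rw [← Finset.sum_mul]
      exact (h.pow_cs' (by omega)).mul_left)
  have pt : ∀ x, Aw f ζ r k x ≤
      r ^ 2 * ∑ j, Dd j (fun x => ∑ i, Dd i f x * Dd j (Dd i f) x * ζ x ^ (2 * k + 4)) x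
      + δ / 2 * Dw f ζ k x + ((n:ℝ) ^ 2 / (2 * δ) + ((n:ℝ) ^ 2 * K) ^ 2 / 2) * Bw f ζ r k x
      + 1 / 2 * Aw f ζ r k x := by
    intro x
    have h0 := h.nn x
    set a : ℝ := r * ζ x ^ (k + 2) * √(Hs f x) with ha
    set b : ℝ := r ^ 2 * ζ x ^ (k + 1) * √(Gs f x) with hb
    set d : ℝ := ζ x ^ (k + 3) * √(Ps f x) with hd
    have eA : Aw f ζ r k x = a ^ 2 := by
      simp only [Aw, ha, mul_pow, Real.sq_sqrt (Hs_nn f x)]; ring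
    have eB : Bw f ζ r k x = b ^ 2 := by
      simp only [Bw, hb, mul_pow, Real.sq_sqrt (Gs_nn f x)]; ring
    have eD : Dw f ζ k x = d ^ 2 := by
      simp only [Dw, hd, mul_pow, Real.sq_sqrt (Ps_nn f x)]; ring
    have e : ∀ j, Dd j (fun x => ∑ i, Dd i f x * Dd j (Dd i f) x * ζ x ^ (2 * k + 4)) x =
        ∑ i, (ζ x ^ (2 * k + 4) * (Dd j (Dd i f) x) ^ 2
         + Dd i f x * Dd i (Dd j (Dd j f)) x * ζ x ^ (2 * k + 4)
         + Dd i f x * Dd j (Dd i f) x * Dd j (fun x => ζ x ^ (2 * k + 4)) x) := by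
      intro j
      rw [dd_sum _ (fun i => sF0 i j)]
      refine Finset.sum_congr rfl fun i _ => ?_
      rw [dd_mul ((hf.dd i).mul ((hf.dd i).dd j)) (h.pow_sm _),
        dd_mul (hf.dd i) ((hf.dd i).dd j)]
      rw [dd_comm (hf.dd j) i j, dd_comm hf i j]
      ring
    have e2 : Aw f ζ r k x =
        r ^ 2 * ∑ j, Dd j (fun x => ∑ i, Dd i f x * Dd j (Dd i f) x * ζ x ^ (2 * k + 4)) x
        - ∑ i, r ^ 2 * (Dd i f x * Dd i (laplacian f) x * ζ x ^ (2 * k + 4))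
        - ∑ j, ∑ i, r ^ 2 *
          (Dd i f x * Dd j (Dd i f) x * Dd j (fun x => ζ x ^ (2 * k + 4)) x) := by
      simp_rw [e, Finset.sum_add_distrib]
      have e4 : ∑ j, ∑ i, Dd i f x * Dd i (Dd j (Dd j f)) x * ζ x ^ (2 * k + 4)
          = ∑ i, (Dd i f x * Dd i (laplacian f) x * ζ x ^ (2 * k + 4)) := by
        rw [Finset.sum_comm]
        refine Finset.sum_congr rfl fun i _ => ?_
        rw [lap_eq hf, dd_sum _ (fun j => ((hf.dd j).dd j)), Finset.mul_sum, Finset.sum_mul]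
      have e5 : ∑ j, ∑ i, ζ x ^ (2 * k + 4) * (Dd j (Dd i f) x) ^ 2 =
          ζ x ^ (2 * k + 4) * Hs f x := by
        rw [Finset.sum_comm]
        simp_rw [Hs, Finset.mul_sum]
      rw [e4, e5]
      simp_rw [← Finset.mul_sum]
      unfold Aw
      ring
    have e3 : -∑ i, r ^ 2 * (Dd i f x * Dd i (laplacian f) x * ζ x ^ (2 * k + 4))
        ≤ n * (b * d) := by
      refine (neg_le_abs _).trans ((Finset.abs_sum_le_sum_abs _ _).trans ?_)
      have : (n:ℝ) * (b * d) = ∑ i : Fin n, (b * d) := by simp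
      rw [this]
      refine Finset.sum_le_sum fun i _ => ?_
      have p1 := abs_mul_le (abs_mul_le (le_Gs f x i) (le_Gs (laplacian f) x i))
        (abs_of_nonneg (pow_nonneg h0 (2*k+4))).le
      rw [abs_mul, abs_of_nonneg (by positivity : 0 ≤ r ^ 2)]
      refine (mul_le_mul_of_nonneg_left p1 (by positivity)).trans (le_of_eq ?_)
      rw [hb, hd, show Ps f x = Gs (laplacian f) x from rfl]
      ring
    have e6 : -∑ j, ∑ i, r ^ 2 *
          (Dd i f x * Dd j (Dd i f) x * Dd j (fun x => ζ x ^ (2 * k + 4)) x)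
        ≤ (n:ℝ) ^ 2 * (K * (b * a)) := by
      refine (neg_le_abs _).trans ((Finset.abs_sum_le_sum_abs _ _).trans ?_)
      have : (n:ℝ) ^ 2 * (K * (b * a)) = ∑ j : Fin n, ∑ i : Fin n, (K * (b * a)) := by
        simp; ring
      rw [this]
      refine Finset.sum_le_sum fun j _ => ((Finset.abs_sum_le_sum_abs _ _).trans
        (Finset.sum_le_sum fun i _ => ?_))
      have p2 := abs_mul_le (abs_mul_le (le_Gs f x i) (le_Hs f x i j)) (h.pow_d1 (2*k+3) x j)
      push_cast at p2
      rw [abs_mul, abs_of_nonneg (by positivity : 0 ≤ r ^ 2)]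
      refine (mul_le_mul_of_nonneg_left p2 (by positivity)).trans (le_of_eq ?_)
      rw [ha, hb, hK]
      ring
    rw [eA, eB, eD] at *
    have y1 : n * (b * d) ≤ δ / 2 * d ^ 2 + (n:ℝ) ^ 2 / (2 * δ) * b ^ 2 := by
      have : δ / 2 * d ^ 2 + (n:ℝ) ^ 2 / (2 * δ) * b ^ 2 - n * (b * d)
        = (δ * d - n * b) ^ 2 / (2 * δ) := by field_simp; ring
      have : 0 ≤ (δ * d - n * b) ^ 2 / (2 * δ) := by positivity
      linarith
    have y2 : (n:ℝ) ^ 2 * (K * (b * a)) ≤ 1 / 2 * a ^ 2 + ((n:ℝ) ^ 2 * K) ^ 2 / 2 * b ^ 2 := by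
      nlinarith [sq_nonneg (a - (n:ℝ) ^ 2 * K * b)]
    linarith
  have iA := Aw_int (k := k) h hf
  have iB := Bw_int (k := k) h hf
  have iD := Dw_int (k := k) h hf
  have := integral_mono iA (((d1.add (iD.const_mul (δ/2))).add
    (iB.const_mul ((n:ℝ) ^ 2 / (2 * δ) + ((n:ℝ) ^ 2 * K) ^ 2 / 2))).add (iA.const_mul (1/2))) pt
  simp only [Pi.add_apply] at this
  rw [integral_add, integral_add, integral_add, d2, integral_const_mul, integral_const_mul,
    integral_const_mul] at this
  · have hc0 : 0 ≤ (∫ x, Bw f ζ r k x) := by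
      apply integral_nonneg
      intro x
      have := h.nn x
      have := Gs_nn f x
      simp only [Bw, Pi.zero_apply]
      positivity
    linarith
  · exact d1
  · exact iD.const_mul _
  · exact d1.add (iD.const_mul _)
  · exact iB.const_mul _
  · exact (d1.add (iD.const_mul _)).add (iB.const_mul _)
  · exact iA.const_mul _

lemma Cw_nn {n k : ℕ} {f ζ : EE n → ℝ} {r : ℝ} (h : Cut ζ r) (x : EE n) : 0 ≤ Cw f ζ r k x := by
  have := h.nn x
  unfold Cw
  positivity

lemma Dw_nn {n k : ℕ} {f ζ : EE n → ℝ} {r : ℝ} (h : Cut ζ r) (x : EE n) : 0 ≤ Dw f ζ k x := by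
  have := h.nn x
  have := Ps_nn f x
  unfold Dw
  positivity

lemma Ws_int {n k : ℕ} (hk : k ≠ 0) {f ζ : EE n → ℝ} {r : ℝ} (h : Cut ζ r) (hf : Sm f) :
    Integrable (Ws f ζ r k) :=
  ((Aw_int h hf).add (Bw_int h hf)).add (Cw_int hk h hf)

lemma interp (n k : ℕ) (hk : k ≠ 0) (δ : ℝ) (hδ : 0 < δ) : ∃ C : ℝ, 0 < C ∧
    ∀ (f ζ : EE n → ℝ) (r : ℝ), Sm f → Cut ζ r →
    (∫ x, Ws f ζ r k x) ≤ δ * (∫ x, Dw f ζ k x) + C * (∫ x, Cw f ζ r k x) := by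
  obtain ⟨C2, hC2, H2⟩ := interp2 n k (δ / 4) (by positivity)
  obtain ⟨C1, hC1, H1⟩ := interp1 n k hk (1 / (2 * (C2 + 1))) (by positivity)
  refine ⟨2 * C1 * (C2 + 1) + 1, by positivity, ?_⟩
  intro f ζ r hf h
  have iA := Aw_int (k := k) h hf
  have iB := Bw_int (k := k) h hf
  have iC := Cw_int hk h hf
  have e : (∫ x, Ws f ζ r k x) = (∫ x, Aw f ζ r k x) + (∫ x, Bw f ζ r k x) + (∫ x, Cw f ζ r k x) := by
    rw [← integral_add iA iB]
    exact integral_add (iA.add iB) iC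
  have h1 := H1 f ζ r hf h
  have h2 := H2 f ζ r hf h
  rw [e]
  set A := (∫ x, Aw f ζ r k x)
  set B := (∫ x, Bw f ζ r k x)
  set Q := (∫ x, Cw f ζ r k x)
  set D := (∫ x, Dw f ζ k x)
  have h3 : (C2 + 1) * B ≤ A / 2 + C1 * (C2 + 1) * Q := by
    have := mul_le_mul_of_nonneg_left h1 (by positivity : 0 ≤ C2 + 1)
    refine this.trans (le_of_eq ?_)
    field_simp
  have hB : 0 ≤ B := by
    apply integral_nonneg
    intro x
    have := h.nn x
    have := Gs_nn f x
    simp only [Bw, Pi.zero_apply]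
    positivity
  have hD : 0 ≤ δ * D := by
    apply mul_nonneg hδ.le
    apply integral_nonneg
    intro x
    exact Dw_nn h x
  nlinarith


lemma upper (n k : ℕ) (hk : k ≠ 0) (δ : ℝ) (hδ : 0 < δ) : ∃ C : ℝ, 0 < C ∧
    ∀ (f ζ : EE n → ℝ) (r : ℝ), Sm f → Cut ζ r →
    (∫ x, Ps (fun x => f x * ζ x ^ (k + 3)) x) ≤ (1 + δ) * (∫ x, Dw f ζ k x)
      + C * (∫ x, Cw f ζ r k x) := by
  obtain ⟨C1, hC1, H1⟩ := rest_bound n k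
  set C2 : ℝ := (1 + 2 / δ) * C1 with hC2
  have hC2p : 0 < C2 := by positivity
  obtain ⟨C3, hC3, H3⟩ := interp n k hk (δ / (2 * C2)) (by positivity)
  refine ⟨C2 * C3, by positivity, ?_⟩
  intro f ζ r hf h
  have pt : ∀ x, Ps (fun x => f x * ζ x ^ (k + 3)) x ≤ (1 + δ / 2) * Dw f ζ k x
      + C2 * Ws f ζ r k x := by
    intro x
    have h1 := H1 f ζ r hf h x
    set y : Fin n → ℝ := fun j => Dd j (laplacian (fun x => f x * ζ x ^ (k + 3))) x with hy
    set z : Fin n → ℝ := fun j => ζ x ^ (k + 3) * Dd j (laplacian f) x with hz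
    have e1 : Ps (fun x => f x * ζ x ^ (k + 3)) x = ∑ j, (y j) ^ 2 := rfl
    have e2 : Dw f ζ k x = ∑ j, (z j) ^ 2 := by
      simp only [Dw, Ps, hz, Finset.mul_sum, mul_pow]
      refine Finset.sum_congr rfl fun j _ => ?_
      ring
    have e3 : ∑ j, (y j) ^ 2 ≤ (1 + δ / 2) * ∑ j, (z j) ^ 2
        + (1 + 2 / δ) * ∑ j, (y j - z j) ^ 2 := by
      rw [Finset.mul_sum, Finset.mul_sum, ← Finset.sum_add_distrib]
      refine Finset.sum_le_sum fun j _ => ?_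
      have : (1 + δ / 2) * z j ^ 2 + (1 + 2 / δ) * (y j - z j) ^ 2 - y j ^ 2
        = (δ * z j - 2 * (y j - z j)) ^ 2 / (2 * δ) := by field_simp; ring
      have : 0 ≤ (δ * z j - 2 * (y j - z j)) ^ 2 / (2 * δ) := by positivity
      linarith
    rw [e1, e2]
    refine e3.trans ?_
    rw [hC2, mul_assoc]
    gcongr
  have iD := Dw_int (k := k) h hf
  have iW := Ws_int hk h hf
  have hsm : Sm (fun x => f x * ζ x ^ (k + 3)) := hf.mul (h.pow_sm _)
  have hcs : HasCompactSupport (fun x => f x * ζ x ^ (k + 3)) := (h.pow_cs' (by omega)).mul_left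
  have h2 := integral_mono_of_nonneg (Eventually.of_forall fun x => Ps_nn _ x)
    ((iD.const_mul (1 + δ / 2)).add (iW.const_mul C2)) (Eventually.of_forall pt)
  simp only [Pi.add_apply] at h2
  rw [integral_add (iD.const_mul _) (iW.const_mul _), integral_const_mul, integral_const_mul] at h2
  have h3 := mul_le_mul_of_nonneg_left (H3 f ζ r hf h) hC2p.le
  have e : C2 * (δ / (2 * C2) * (∫ x, Dw f ζ k x) + C3 * (∫ x, Cw f ζ r k x)) =
      δ / 2 * (∫ x, Dw f ζ k x) + C2 * C3 * (∫ x, Cw f ζ r k x) := by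
    field_simp
  rw [e] at h3
  linarith

lemma lower (n k : ℕ) (hk : k ≠ 0) (δ : ℝ) (hδ : 0 < δ) : ∃ C : ℝ, 0 < C ∧
    ∀ (f ζ : EE n → ℝ) (r : ℝ), Sm f → Cut ζ r →
    |(∫ x, ∑ j, Dd j (laplacian f) x * Dd j (laplacian (fun x => f x * ζ x ^ (2 * k + 6))) x)
      - (∫ x, Dw f ζ k x)| ≤ δ * (∫ x, Dw f ζ k x) + C * (∫ x, Cw f ζ r k x) := by
  obtain ⟨C1, hC1, H1⟩ := rest_bound n (2 * k + 3)
  set C2 : ℝ := C1 / (2 * δ) with hC2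
  have hC2p : 0 < C2 := by positivity
  obtain ⟨C3, hC3, H3⟩ := interp n k hk (δ / (2 * C2)) (by positivity)
  refine ⟨C2 * C3, by positivity, ?_⟩
  intro f ζ r hf h
  have pt : ∀ x, |(∑ j, Dd j (laplacian f) x *
        Dd j (laplacian (fun x => f x * ζ x ^ (2 * k + 6))) x) - Dw f ζ k x| ≤
      δ / 2 * Dw f ζ k x + C2 * Ws f ζ r k x := by
    intro x
    have h0 := h.nn x
    have h1 := H1 f ζ r hf h x
    rw [show 2 * k + 3 + 3 = 2 * k + 6 from rfl] at h1
    have eW : Ws f ζ r (2 * k + 3) x = ζ x ^ (2 * k + 6) * Ws f ζ r k x := by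
      unfold Ws; ring
    rw [eW] at h1
    set d : Fin n → ℝ := fun j => Dd j (laplacian f) x with hd
    set e : Fin n → ℝ := fun j => Dd j (laplacian (fun x => f x * ζ x ^ (2 * k + 6))) x
      - ζ x ^ (2 * k + 6) * Dd j (laplacian f) x with he
    have e1 : (∑ j, Dd j (laplacian f) x *
        Dd j (laplacian (fun x => f x * ζ x ^ (2 * k + 6))) x) - Dw f ζ k x
        = ∑ j, d j * e j := by
      simp only [Dw, Ps, hd, he, Finset.mul_sum, ← Finset.sum_sub_distrib]
      refine Finset.sum_congr rfl fun j _ => ?_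
      ring
    have cs : (∑ j, d j * e j) ^ 2 ≤ (∑ j, d j ^ 2) * ∑ j, e j ^ 2 :=
      Finset.sum_mul_sq_le_sq_mul_sq _ _ _
    have hP : ∑ j, d j ^ 2 = Ps f x := rfl
    have hPn := Ps_nn f x
    have hWn : 0 ≤ Ws f ζ r k x := by
      have := Hs_nn f x
      have := Gs_nn f x
      unfold Ws
      have := h.rpos.le
      positivity
    have hDn := Dw_nn (f := f) (k := k) h x
    rw [e1]
    apply abs_le_of_sq_le_sq _ (by positivity)
    calc (∑ j, d j * e j) ^ 2 ≤ Ps f x * (C1 * (ζ x ^ (2 * k + 6) * Ws f ζ r k x)) := by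
          rw [← hP]
          refine cs.trans ?_
          gcongr
      _ = Dw f ζ k x * (C1 * Ws f ζ r k x) := by unfold Dw; ring
      _ ≤ _ := by
        rw [hC2]
        have : (δ / 2 * Dw f ζ k x + C1 / (2 * δ) * Ws f ζ r k x) ^ 2
          - Dw f ζ k x * (C1 * Ws f ζ r k x)
          = (δ / 2 * Dw f ζ k x - C1 / (2 * δ) * Ws f ζ r k x) ^ 2 := by
          field_simp; ring
        have := sq_nonneg (δ / 2 * Dw f ζ k x - C1 / (2 * δ) * Ws f ζ r k x)
        linarith
  have iD := Dw_int (k := k) h hf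
  have iW := Ws_int hk h hf
  have hsm : Sm (fun x => f x * ζ x ^ (2 * k + 6)) := hf.mul (h.pow_sm _)
  have hcs : HasCompactSupport (fun x => f x * ζ x ^ (2 * k + 6)) :=
    (h.pow_cs' (by omega)).mul_left
  have iF : Integrable (fun x => ∑ j, Dd j (laplacian f) x *
      Dd j (laplacian (fun x => f x * ζ x ^ (2 * k + 6))) x) := by
    apply integrable_finsetSum
    intro j _
    exact int_cs ((hf.lap.dd j).continuous.mul (hsm.lap.dd j).continuous)
      (dd_cs (lap_cs hcs) j).mul_left
  rw [← integral_sub iF iD]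
  refine (abs_integral_le_integral_abs).trans ?_
  have h2 := integral_mono (iF.sub iD).abs
    ((iD.const_mul (δ / 2)).add (iW.const_mul C2)) pt
  simp only [Pi.add_apply] at h2
  rw [integral_add (iD.const_mul _) (iW.const_mul _), integral_const_mul, integral_const_mul] at h2
  have h3 := mul_le_mul_of_nonneg_left (H3 f ζ r hf h) hC2p.le
  have e : C2 * (δ / (2 * C2) * (∫ x, Dw f ζ k x) + C3 * (∫ x, Cw f ζ r k x)) =
      δ / 2 * (∫ x, Dw f ζ k x) + C2 * C3 * (∫ x, Cw f ζ r k x) := by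
    field_simp
  rw [e] at h3
  refine h2.trans ?_
  linarith


lemma dd_smul {n : ℕ} {f : EE n → ℝ} (a : ℝ) (i : Fin n) :
    Dd i (fun x => f (a • x)) = fun x => a * Dd i f (a • x) := by
  funext x
  unfold Dd
  rw [fderiv_comp_smul]
  simp

lemma cs_bdd {n : ℕ} {f : EE n → ℝ} (hf : Continuous f) (h : HasCompactSupport f) :
    ∃ C, ∀ x, |f x| ≤ C := by
  obtain ⟨C, hC⟩ := h.exists_bound_of_continuous hf
  exact ⟨C, fun x => hC x⟩

lemma cut_exists (n : ℕ) : ∃ (V : ℝ) (r : ℕ → ℝ) (ζ : ℕ → EE n → ℝ), 0 < V ∧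
    (∀ N, Cut (ζ N) (r N)) ∧ Tendsto r atTop (nhds 0) ∧
    (∀ (N : ℕ) x, ‖x‖ ≤ (N:ℝ) + 1 → ζ N x = 1) ∧
    (∀ (N : ℕ) x, x ∉ Metric.closedBall (0 : EE n) (2 * ((N:ℝ) + 1)) → ζ N x = 0) ∧
    (∀ (N : ℕ), (r N) ^ n * volume.real (Metric.closedBall (0 : EE n) (2 * ((N:ℝ) + 1))) ≤ V) := by
  let b : ContDiffBump (0 : EE n) := ⟨1, 2, by norm_num, by norm_num⟩
  have hbs : Sm (b : EE n → ℝ) := b.contDiff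
  have hbc : HasCompactSupport (b : EE n → ℝ) := b.hasCompactSupport
  have c1 : ∀ i, ∃ C, ∀ x, |Dd i b x| ≤ C := fun i =>
    cs_bdd (hbs.dd i).continuous (dd_cs hbc i)
  have c2 : ∀ i j, ∃ C, ∀ x, |Dd j (Dd i b) x| ≤ C := fun i j =>
    cs_bdd ((hbs.dd i).dd j).continuous (dd_cs (dd_cs hbc i) j)
  have c3 : ∀ i j l, ∃ C, ∀ x, |Dd l (Dd j (Dd i b)) x| ≤ C := fun i j l =>
    cs_bdd (((hbs.dd i).dd j).dd l).continuous (dd_cs (dd_cs (dd_cs hbc i) j) l)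
  choose C1 h1 using c1
  choose C2 h2 using c2
  choose C3 h3 using c3
  set c : ℝ := 1 + ∑ i, |C1 i| + ∑ i, ∑ j, |C2 i j| + ∑ i, ∑ j, ∑ l, |C3 i j l| with hc
  have s1 : 0 ≤ ∑ i, |C1 i| := Finset.sum_nonneg fun _ _ => abs_nonneg _
  have s2 : 0 ≤ ∑ i, ∑ j, |C2 i j| :=
    Finset.sum_nonneg fun _ _ => Finset.sum_nonneg fun _ _ => abs_nonneg _
  have s3 : 0 ≤ ∑ i, ∑ j, ∑ l, |C3 i j l| :=
    Finset.sum_nonneg fun _ _ => Finset.sum_nonneg fun _ _ => Finset.sum_nonneg fun _ _ =>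
      abs_nonneg _
  have hc1 : 1 ≤ c := by linarith
  have b1 : ∀ i x, |Dd i b x| ≤ c := by
    intro i x
    have := Finset.single_le_sum (f := fun i => |C1 i|) (fun _ _ => abs_nonneg _)
      (Finset.mem_univ i)
    have h := h1 i x
    have := le_abs_self (C1 i)
    linarith
  have b2 : ∀ i j x, |Dd j (Dd i b) x| ≤ c := by
    intro i j x
    have t1 := Finset.single_le_sum (f := fun j => |C2 i j|) (fun _ _ => abs_nonneg _)
      (Finset.mem_univ j)
    have t2 := Finset.single_le_sum (f := fun i => ∑ j, |C2 i j|)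
      (fun _ _ => Finset.sum_nonneg fun _ _ => abs_nonneg _) (Finset.mem_univ i)
    have h := h2 i j x
    have := le_abs_self (C2 i j)
    linarith
  have b3 : ∀ i j l x, |Dd l (Dd j (Dd i b)) x| ≤ c := by
    intro i j l x
    have t1 := Finset.single_le_sum (f := fun l => |C3 i j l|) (fun _ _ => abs_nonneg _)
      (Finset.mem_univ l)
    have t2 := Finset.single_le_sum (f := fun j => ∑ l, |C3 i j l|)
      (fun _ _ => Finset.sum_nonneg fun _ _ => abs_nonneg _) (Finset.mem_univ j)
    have t3 := Finset.single_le_sum (f := fun i => ∑ j, ∑ l, |C3 i j l|)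
      (fun _ _ => Finset.sum_nonneg fun _ _ => Finset.sum_nonneg fun _ _ => abs_nonneg _)
      (Finset.mem_univ i)
    have h := h3 i j l x
    have := le_abs_self (C3 i j l)
    linarith
  have hN : ∀ N : ℕ, 0 < (N:ℝ) + 1 := fun N => by positivity
  have hc0 : 0 < c := by linarith
  refine ⟨(2 * c) ^ n * volume.real (Metric.closedBall (0 : EE n) 1) + 1,
    fun N => c * ((N:ℝ) + 1)⁻¹,
    fun N x => b (((N:ℝ) + 1)⁻¹ • x), by positivity, ?_, ?_, ?_, ?_, ?_⟩
  · intro N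
    have ha : 0 < ((N:ℝ) + 1)⁻¹ := inv_pos.mpr (hN N)
    set a := ((N:ℝ) + 1)⁻¹ with ha'
    have sc : ∀ (g : EE n → ℝ), Sm g → Sm (fun x => g (a • x)) := fun g hg =>
      hg.comp (contDiff_const_smul a)
    have D1 : ∀ i, Dd i (fun x => b (a • x)) = fun x => a * Dd i b (a • x) := fun i => dd_smul a i
    have D2 : ∀ i j, Dd j (Dd i (fun x => b (a • x))) = fun x => a * (a * Dd j (Dd i b) (a • x)) := by
      intro i j
      rw [D1, dd_const_mul (sc _ (hbs.dd i)), dd_smul]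
    have D3 : ∀ i j l, Dd l (Dd j (Dd i (fun x => b (a • x)))) =
        fun x => a * (a * (a * Dd l (Dd j (Dd i b)) (a • x))) := by
      intro i j l
      rw [D2, dd_const_mul (contDiff_const.mul (sc _ ((hbs.dd i).dd j))),
        dd_const_mul (sc _ ((hbs.dd i).dd j)), dd_smul]
    refine ⟨sc _ hbs, ?_, fun x => b.nonneg, fun x => b.le_one, by positivity, ?_, ?_, ?_⟩
    · exact hbc.comp_homeomorph (Homeomorph.smulOfNeZero a ha.ne')
    · intro x i
      rw [D1, abs_mul, abs_of_pos ha]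
      calc _ ≤ a * c := mul_le_mul_of_nonneg_left (b1 _ _) ha.le
        _ = _ := by ring
    · intro x i j
      rw [D2, abs_mul, abs_mul, abs_of_pos ha]
      have h := (b2 i j (a • x)).trans (le_self_pow₀ hc1 (by norm_num : (2:ℕ) ≠ 0))
      calc _ ≤ a * (a * c ^ 2) := by gcongr
        _ = _ := by ring
    · intro x i j l
      rw [D3, abs_mul, abs_mul, abs_mul, abs_of_pos ha]
      have h := (b3 i j l (a • x)).trans (le_self_pow₀ hc1 (by norm_num : (3:ℕ) ≠ 0))
      calc _ ≤ a * (a * (a * c ^ 3)) := by gcongr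
        _ = _ := by ring
  · have := (tendsto_one_div_add_atTop_nhds_zero_nat (𝕜 := ℝ)).const_mul c
    simpa using this
  · intro N x hx
    apply b.one_of_mem_closedBall
    rw [mem_closedBall_zero_iff, norm_smul, norm_inv, Real.norm_of_nonneg (hN N).le]
    show _ ≤ (1:ℝ)
    rw [inv_mul_le_iff₀ (hN N)]
    linarith
  · intro N x hx
    apply b.zero_of_le_dist
    rw [dist_zero_right, norm_smul, norm_inv, Real.norm_of_nonneg (hN N).le]
    show (2:ℝ) ≤ _
    rw [mem_closedBall_zero_iff, not_le] at hx
    rw [le_inv_mul_iff₀ (hN N)]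
    linarith
  · intro N
    have hv := Measure.addHaar_real_closedBall (volume : Measure (EE n)) 0
      (r := 2 * ((N:ℝ) + 1)) (by positivity)
    have hv2 := Measure.addHaar_real_closedBall (volume : Measure (EE n)) 0
      (r := 1) (by positivity)
    rw [finrank_euclideanSpace_fin] at hv hv2
    rw [one_pow, one_mul] at hv2
    rw [hv, hv2]
    have : (c * ((N:ℝ) + 1)⁻¹) ^ n * ((2 * ((N:ℝ) + 1)) ^ n *
      volume.real (Metric.ball (0 : EE n) 1)) = (2 * c) ^ n * volume.real (Metric.ball (0 : EE n) 1) := by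
      rw [← mul_assoc, ← mul_pow]
      congr 2
      have := (hN N).ne'
      field_simp
    rw [this]
    linarith

lemma young6 {n : ℕ} (hn : 7 ≤ n) {q : ℝ} (hq : q = 2 * n / ((n:ℝ) - 6)) {l : ℝ} (hl : 0 < l)
    {t r : ℝ} (ht : 0 ≤ t) (hr : 0 ≤ r) :
    r ^ 6 * t ^ 2 ≤ l ^ (q / 2) * t ^ q + (l⁻¹) ^ ((n:ℝ) / 6) * r ^ n := by
  have hn' : (7:ℝ) ≤ n := by exact_mod_cast hn
  have h6 : 0 < (n:ℝ) - 6 := by linarith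
  have hn0 : (0:ℝ) < n := by linarith
  have e2 : q / 2 = n / ((n:ℝ) - 6) := by rw [hq]; field_simp
  have hc : (q / 2).HolderConjugate ((n:ℝ) / 6) := by
    rw [Real.holderConjugate_iff, e2]
    constructor
    · rw [lt_div_iff₀ h6]; linarith
    · field_simp; ring
  have y := Real.young_inequality_of_nonneg (a := l * t ^ 2) (b := l⁻¹ * r ^ 6) (by positivity)
    (by positivity) hc
  have e : l * t ^ 2 * (l⁻¹ * r ^ 6) = r ^ 6 * t ^ 2 := by field_simp
  rw [e, Real.mul_rpow hl.le (by positivity), Real.mul_rpow (by positivity) (by positivity)] at y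
  have e3 : (t ^ 2) ^ (q / 2) = t ^ q := by
    rw [← Real.rpow_natCast, ← Real.rpow_mul ht]
    congr 1
    push_cast; ring
  have e4 : (r ^ 6) ^ ((n:ℝ) / 6) = r ^ n := by
    rw [← Real.rpow_natCast, ← Real.rpow_mul hr, ← Real.rpow_natCast]
    congr 1
    push_cast; ring
  rw [e3, e4] at y
  refine y.trans (add_le_add ?_ ?_)
  · apply div_le_self (by positivity) hc.lt.le
  · apply div_le_self (by positivity) hc.symm.lt.le

lemma young_a {n : ℕ} (hn : 7 ≤ n) {q : ℝ} (hq : q = 2 * n / ((n:ℝ) - 6)) {ε : ℝ} (hε : 0 < ε) :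
    ∃ C : ℝ, 0 < C ∧ ∀ t r : ℝ, 0 ≤ t → 0 ≤ r → r ^ 6 * t ^ 2 ≤ ε * t ^ q + C * r ^ n := by
  have hn' : (7:ℝ) ≤ n := by exact_mod_cast hn
  have h6 : 0 < (n:ℝ) - 6 := by linarith
  have hq0 : 0 < q := by rw [hq]; positivity
  have hl : 0 < ε ^ (2 / q) := by positivity
  refine ⟨((ε ^ (2 / q))⁻¹) ^ ((n:ℝ) / 6), by positivity, fun t r ht hr => ?_⟩
  have := young6 hn hq hl ht hr
  rw [← Real.rpow_mul hε.le, show 2 / q * (q / 2) = 1 by field_simp, Real.rpow_one] at this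
  exact this

lemma young_b {n : ℕ} (hn : 7 ≤ n) {q : ℝ} (hq : q = 2 * n / ((n:ℝ) - 6)) {ε : ℝ} (hε : 0 < ε) :
    ∃ C : ℝ, 0 < C ∧ ∀ t r : ℝ, 0 ≤ t → 0 ≤ r → r ^ 6 * t ^ 2 ≤ C * t ^ q + ε * r ^ n := by
  have hn' : (7:ℝ) ≤ n := by exact_mod_cast hn
  have hn0 : (0:ℝ) < n := by linarith
  have h6 : 0 < (n:ℝ) - 6 := by linarith
  have hl : 0 < (ε ^ (6 / (n:ℝ)))⁻¹ := by positivity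
  refine ⟨((ε ^ (6 / (n:ℝ)))⁻¹) ^ (q / 2), by positivity, fun t r ht hr => ?_⟩
  have := young6 hn hq hl ht hr
  rw [inv_inv, ← Real.rpow_mul hε.le, show 6 / (n:ℝ) * (n / 6) = 1 by field_simp,
    Real.rpow_one] at this
  exact this


lemma lap_local {n : ℕ} {f g : EE n → ℝ} {x : EE n} (h : f =ᶠ[nhds x] g) :
    laplacian f =ᶠ[nhds x] laplacian g := by
  have := h.iteratedFDeriv ℝ 2
  filter_upwards [this] with y hy
  simp only [laplacian, hy]

lemma Ps_local {n : ℕ} {f g : EE n → ℝ} {x : EE n} (h : f =ᶠ[nhds x] g) :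
    Ps f x = Ps g x := by
  have h1 := lap_local h
  unfold Ps Dd
  rw [h1.fderiv_eq]

lemma int_of_eq_off {n : ℕ} {F G : EE n → ℝ} (hF : Continuous F) (hG : Continuous G) (ρ : ℝ)
    (h : ∀ x, ρ < ‖x‖ → F x = G x) (hi : Integrable F) : Integrable G := by
  have hc : HasCompactSupport (fun x => G x - F x) := by
    apply HasCompactSupport.intro (isCompact_closedBall (0 : EE n) ρ)
    intro x hx
    rw [mem_closedBall_zero_iff, not_le] at hx
    rw [h x hx, sub_self]
  have := hi.add (int_cs (hG.sub hF) hc)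
  refine this.congr (Eventually.of_forall fun x => ?_)
  simp

lemma int_of_bdd {n : ℕ} {F : EE n → ℝ} (hF : Continuous F) (hp : ∀ x, 0 ≤ F x)
    {ζ : ℕ → EE n → ℝ} {r : ℕ → ℝ} (hc : ∀ N, Cut (ζ N) (r N))
    (h1 : ∀ (N : ℕ) x, ‖x‖ ≤ (N:ℝ) + 1 → ζ N x = 1) {m : ℕ} (hm : m ≠ 0) (C : ℝ)
    (hb : ∀ N, (∫ x, ζ N x ^ m * F x) ≤ C) : Integrable F := by
  have hcov : AECover (volume : Measure (EE n)) atTop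
      (fun N : ℕ => Metric.closedBall (0 : EE n) ((N:ℝ) + 1)) := by
    apply aecover_closedBall
    exact tendsto_atTop_add_const_right _ _ tendsto_natCast_atTop_atTop
  apply hcov.integrable_of_integral_bounded_of_nonneg_ae C
  · intro N
    exact hF.continuousOn.integrableOn_compact (isCompact_closedBall _ _)
  · exact Eventually.of_forall hp
  · refine Eventually.of_forall fun N => le_trans ?_ (hb N)
    have e : ∫ x in Metric.closedBall (0 : EE n) ((N:ℝ) + 1), F x =
        ∫ x in Metric.closedBall (0 : EE n) ((N:ℝ) + 1), ζ N x ^ m * F x := by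
      apply setIntegral_congr_fun Metric.isClosed_closedBall.measurableSet
      intro x hx
      simp only
      rw [h1 N x (by simpa using hx), one_pow, one_mul]
    rw [e]
    apply setIntegral_le_integral
    · have := wint (hc N) hm 1 hF
      simpa using this
    · refine Eventually.of_forall fun x => ?_
      exact mul_nonneg (pow_nonneg ((hc N).nn x) _) (hp x)

lemma lim_cut {n : ℕ} {F : EE n → ℝ} (hF : Integrable F)
    {ζ : ℕ → EE n → ℝ} {r : ℕ → ℝ} (hc : ∀ N, Cut (ζ N) (r N))
    (h1 : ∀ (N : ℕ) x, ‖x‖ ≤ (N:ℝ) + 1 → ζ N x = 1) (m : ℕ) :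
    Tendsto (fun N => ∫ x, ζ N x ^ m * F x) atTop (nhds (∫ x, F x)) := by
  apply tendsto_integral_of_dominated_convergence (fun x => ‖F x‖)
  · intro N
    exact ((hc N).pow_sm m).continuous.aestronglyMeasurable.mul hF.aestronglyMeasurable
  · exact hF.norm
  · intro N
    refine Eventually.of_forall fun x => ?_
    rw [norm_mul, Real.norm_of_nonneg (pow_nonneg ((hc N).nn x) _)]
    exact mul_le_of_le_one_left (norm_nonneg _) (pow_le_one₀ ((hc N).nn x) ((hc N).le x))
  · refine Eventually.of_forall fun x => ?_
    apply tendsto_const_nhds.congr'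
    obtain ⟨M, hM⟩ := exists_nat_ge ‖x‖
    filter_upwards [eventually_ge_atTop M] with N hN
    rw [h1 N x, one_pow, one_mul]
    have : (M:ℝ) ≤ N := by exact_mod_cast hN
    linarith

/-- pointwise comparison of powers of the cutoff -/
lemma zpow_le {n k : ℕ} (hk : k + 3 = n) (hn : 7 ≤ n) {q : ℝ} (hq : q = 2 * n / ((n:ℝ) - 6))
    {z y : ℝ} (hz : 0 ≤ z) (hz1 : z ≤ 1) (hy : 0 ≤ y) :
    (z ^ k * y) ^ q ≤ z ^ (2 * k + 6) * y ^ q := by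
  have hn' : (7:ℝ) ≤ n := by exact_mod_cast hn
  have h6 : 0 < (n:ℝ) - 6 := by linarith
  rw [Real.mul_rpow (by positivity) hy]
  gcongr
  rw [← Real.rpow_natCast, ← Real.rpow_mul hz, ← Real.rpow_natCast]
  apply Real.rpow_le_rpow_of_exponent_ge' hz hz1 (by positivity)
  have : (k:ℝ) = n - 3 := by
    have : (k:ℝ) + 3 = n := by exact_mod_cast hk
    linarith
  push_cast
  rw [this, hq, mul_div_assoc', le_div_iff₀ h6]
  nlinarith

lemma ball_int {n : ℕ} (c R : ℝ) :
    Integrable (fun x => c * (Metric.closedBall (0 : EE n) R).indicator (fun _ => (1:ℝ)) x) ∧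
    (∫ x, c * (Metric.closedBall (0 : EE n) R).indicator (fun _ => (1:ℝ)) x)
      = c * volume.real (Metric.closedBall (0 : EE n) R) := by
  have hm : MeasurableSet (Metric.closedBall (0 : EE n) R) :=
    Metric.isClosed_closedBall.measurableSet
  constructor
  · apply Integrable.const_mul
    rw [integrable_indicator_iff hm]
    exact continuousOn_const.integrableOn_compact (isCompact_closedBall _ _)
  · rw [integral_const_mul, integral_indicator hm]
    simp

lemma Cw_zero {n k : ℕ} (hk : k ≠ 0) {f ζ : EE n → ℝ} {r : ℝ} {x : EE n} (h : ζ x = 0) :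
    Cw f ζ r k x = 0 := by
  unfold Cw
  rw [h, zero_pow (by omega)]
  simp

lemma Cw_bound {n k : ℕ} (hk : k + 3 = n) (hn : 7 ≤ n) {q : ℝ} (hq : q = 2 * n / ((n:ℝ) - 6))
    {V : ℝ} {ζ : ℕ → EE n → ℝ} {r : ℕ → ℝ} (hc : ∀ N, Cut (ζ N) (r N))
    (h2 : ∀ (N : ℕ) x, x ∉ Metric.closedBall (0 : EE n) (2 * ((N:ℝ) + 1)) → ζ N x = 0)
    (h3 : ∀ (N : ℕ),
      (r N) ^ n * volume.real (Metric.closedBall (0 : EE n) (2 * ((N:ℝ) + 1))) ≤ V)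
    {v F : EE n → ℝ} (hv : Sm v) (hF : Continuous F) (hvF : ∀ x, |v x| ^ q ≤ F x)
    {ε : ℝ} (hε : 0 < ε) :
    ∃ C, ∀ N, (∫ x, Cw v (ζ N) (r N) k x) ≤ ε * (∫ x, ζ N x ^ (2 * k + 6) * F x) + C := by
  obtain ⟨C, hC, H⟩ := young_a hn hq hε
  refine ⟨C * V, fun N => ?_⟩
  have hk0 : k ≠ 0 := by omega
  have hr := (hc N).rpos.le
  obtain ⟨b1, b2⟩ := ball_int (n := n) (C * r N ^ n) (2 * ((N:ℝ) + 1))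
  have iF : Integrable (fun x => ζ N x ^ (2 * k + 6) * F x) := by
    have := wint (hc N) (m := 2 * k + 6) (by omega) 1 hF
    simpa using this
  have pt : ∀ x, Cw v (ζ N) (r N) k x ≤ ε * (ζ N x ^ (2 * k + 6) * F x) +
      C * r N ^ n * (Metric.closedBall (0 : EE n) (2 * ((N:ℝ) + 1))).indicator
        (fun _ => (1:ℝ)) x := by
    intro x
    have h0 := (hc N).nn x
    by_cases hx : x ∈ Metric.closedBall (0 : EE n) (2 * ((N:ℝ) + 1))
    · rw [Set.indicator_of_mem hx, mul_one]
      have y := H (ζ N x ^ k * |v x|) (r N) (by positivity) hr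
      have e : Cw v (ζ N) (r N) k x = r N ^ 6 * (ζ N x ^ k * |v x|) ^ 2 := by
        unfold Cw
        rw [mul_pow, sq_abs]
        ring
      rw [e]
      refine y.trans ?_
      gcongr
      refine (zpow_le hk hn hq h0 ((hc N).le x) (abs_nonneg _)).trans ?_
      gcongr
      exact hvF x
    · rw [Cw_zero hk0 (h2 N x hx), Set.indicator_of_notMem hx, h2 N x hx, zero_pow (by omega)]
      simp
  have := integral_mono (Cw_int hk0 (hc N) hv) ((iF.const_mul ε).add b1) pt
  simp only [Pi.add_apply] at this
  rw [integral_add (iF.const_mul ε) b1, integral_const_mul, b2] at this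
  have h4 := mul_le_mul_of_nonneg_left (h3 N) hC.le
  linarith

lemma Cw_lim {n k : ℕ} (hk : k + 3 = n) (hn : 7 ≤ n) {q : ℝ} (hq : q = 2 * n / ((n:ℝ) - 6))
    {V : ℝ} (hV : 0 < V) {ζ : ℕ → EE n → ℝ} {r : ℕ → ℝ} (hc : ∀ N, Cut (ζ N) (r N))
    (hr0 : Tendsto r atTop (nhds 0))
    (h2 : ∀ (N : ℕ) x, x ∉ Metric.closedBall (0 : EE n) (2 * ((N:ℝ) + 1)) → ζ N x = 0)
    (h3 : ∀ (N : ℕ),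
      (r N) ^ n * volume.real (Metric.closedBall (0 : EE n) (2 * ((N:ℝ) + 1))) ≤ V)
    {v : EE n → ℝ} (hv : Sm v) (hi : Integrable (fun x => |v x| ^ q)) :
    Tendsto (fun N => ∫ x, Cw v (ζ N) (r N) k x) atTop (nhds 0) := by
  have hn' : (7:ℝ) ≤ n := by exact_mod_cast hn
  have h6 : 0 < (n:ℝ) - 6 := by linarith
  have hq0 : 0 < q := by rw [hq]; positivity
  have hk0 : k ≠ 0 := by omega
  have hcq : Continuous (fun x => |v x| ^ q) :=
    hv.continuous.abs.rpow_const (fun _ => Or.inr hq0.le)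
  rw [Metric.tendsto_atTop']
  intro ε hε
  obtain ⟨C, hC, H⟩ := young_b hn hq (ε := ε / (2 * V)) (by positivity)
  have lim : Tendsto (fun N => ∫ x, min (C * |v x| ^ q) (r N ^ 6 * v x ^ 2)) atTop
      (nhds (∫ _x : EE n, (0:ℝ))) := by
    apply tendsto_integral_of_dominated_convergence (fun x => C * |v x| ^ q)
    · intro N
      exact ((continuous_const.mul hcq).min
        (continuous_const.mul (hv.continuous.pow 2))).aestronglyMeasurable
    · exact hi.const_mul C
    · intro N
      refine Eventually.of_forall fun x => ?_
      have := (hc N).rpos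
      rw [Real.norm_of_nonneg (le_min (by positivity) (by positivity))]
      exact min_le_left _ _
    · refine Eventually.of_forall fun x => ?_
      have t1 : Tendsto (fun N => r N ^ 6 * v x ^ 2) atTop (nhds 0) := by
        have := (hr0.pow 6).mul_const (v x ^ 2)
        simpa using this
      have t2 : Tendsto (fun _ : ℕ => C * |v x| ^ q) atTop (nhds (C * |v x| ^ q)) :=
        tendsto_const_nhds
      have := t2.min t1
      rwa [min_eq_right (by positivity)] at this
  rw [integral_zero] at lim
  obtain ⟨M, hM⟩ := (Metric.tendsto_atTop'.mp lim) (ε / 2) (by positivity)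
  refine ⟨M, fun N hN => ?_⟩
  have hMN := hM N hN
  rw [Real.dist_0_eq_abs] at hMN ⊢
  rw [abs_of_nonneg (integral_nonneg fun x => Cw_nn (hc N) x)]
  have hMN' := lt_of_le_of_lt (le_abs_self _) hMN
  have hr := (hc N).rpos.le
  obtain ⟨b1, b2⟩ := ball_int (n := n) (ε / (2 * V) * r N ^ n) (2 * ((N:ℝ) + 1))
  have iM : Integrable (fun x => min (C * |v x| ^ q) (r N ^ 6 * v x ^ 2)) := by
    refine (hi.const_mul C).mono' ((continuous_const.mul hcq).min
        (continuous_const.mul (hv.continuous.pow 2))).aestronglyMeasurable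
        (Eventually.of_forall fun x => ?_)
    rw [Real.norm_of_nonneg (le_min (by positivity) (by positivity))]
    exact min_le_left _ _
  have pt : ∀ x, Cw v (ζ N) (r N) k x ≤ min (C * |v x| ^ q) (r N ^ 6 * v x ^ 2) +
      ε / (2 * V) * r N ^ n * (Metric.closedBall (0 : EE n) (2 * ((N:ℝ) + 1))).indicator
        (fun _ => (1:ℝ)) x := by
    intro x
    have h0 := (hc N).nn x
    by_cases hx : x ∈ Metric.closedBall (0 : EE n) (2 * ((N:ℝ) + 1))
    · rw [Set.indicator_of_mem hx, mul_one]
      have y := H (|v x|) (r N) (by positivity) hr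
      have e : Cw v (ζ N) (r N) k x ≤ r N ^ 6 * v x ^ 2 := by
        unfold Cw
        gcongr
        exact mul_le_of_le_one_right (by positivity) (pow_le_one₀ h0 ((hc N).le x))
      rw [sq_abs] at y
      have : 0 ≤ ε / (2 * V) * r N ^ n := by positivity
      rcases min_cases (C * |v x| ^ q) (r N ^ 6 * v x ^ 2) with ⟨h, _⟩ | ⟨h, _⟩ <;> rw [h] <;> linarith
    · rw [Cw_zero hk0 (h2 N x hx), Set.indicator_of_notMem hx, mul_zero, add_zero]
      exact le_min (by positivity) (by positivity)
  have := integral_mono (Cw_int hk0 (hc N) hv) (iM.add b1) pt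
  simp only [Pi.add_apply] at this
  rw [integral_add iM b1, b2] at this
  have h4 := mul_le_mul_of_nonneg_left (h3 N) (by positivity : 0 ≤ ε / (2 * V))
  rw [show ε / (2 * V) * V = ε / 2 by field_simp] at h4
  linarith

/-- The arithmetic of the final absorption argument. -/
lemma absorb {p δ C1 C2 ε A K E D Q : ℝ} (hp : 1 < p) (hδ : δ = (p - 1) / (2 * (p + 1)))
    (hC1 : 0 < C1) (hC2 : 0 < C2) (hε : ε = (p - 1) / (4 * (3 * C2 + C1)))
    (s1 : p * E ≤ (1 + δ) * D + C1 * Q) (s2 : (1 - δ) * D ≤ E + K + C2 * Q)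
    (s3 : Q ≤ ε * E + A) (hK : 0 ≤ K) (hQ : 0 ≤ Q) :
    (p - 1) / 4 * E ≤ 3 * K + (3 * C2 + C1) * A := by
  have hp1 : 0 < p - 1 := by linarith
  have hd0 : 0 < δ := by rw [hδ]; positivity
  have hd : δ * (2 * (p + 1)) = p - 1 := by rw [hδ]; field_simp
  have he : ε * (4 * (3 * C2 + C1)) = p - 1 := by rw [hε]; field_simp
  have t2 : (p + 3) * D ≤ 2 * (p + 1) * (E + K + C2 * Q) := by
    have := mul_le_mul_of_nonneg_left s2 (by linarith : 0 ≤ 2 * (p + 1))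
    have e : 2 * (p + 1) * ((1 - δ) * D) = (p + 3) * D := by
      linear_combination -D * hd
    linarith
  have t1 : 2 * (p + 1) * (p * E) ≤ (3 * p + 1) * D + 2 * (p + 1) * (C1 * Q) := by
    have := mul_le_mul_of_nonneg_left s1 (by linarith : 0 ≤ 2 * (p + 1))
    have e : 2 * (p + 1) * ((1 + δ) * D + C1 * Q)
        = (3 * p + 1) * D + 2 * (p + 1) * (C1 * Q) := by
      linear_combination D * hd
    linarith
  have t3 : (p + 3) * (p * E) ≤ (3 * p + 1) * (E + K + C2 * Q) + (p + 3) * (C1 * Q) := by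
    have a := mul_le_mul_of_nonneg_left t1 (by linarith : 0 ≤ p + 3)
    have b := mul_le_mul_of_nonneg_left t2 (by linarith : 0 ≤ 3 * p + 1)
    have : 0 < 2 * (p + 1) := by linarith
    refine le_of_mul_le_mul_left ?_ this
    nlinarith
  set R := 3 * K + (3 * C2 + C1) * Q with hR
  have hKQ : 0 ≤ K + C2 * Q := by positivity
  have hR0 : 0 ≤ R := by positivity
  have t4 : (p + 1) * ((p - 1) * E) ≤ (p + 1) * (2 * R) := by
    have e1 : (3 * p + 1) * (K + C2 * Q) ≤ (p + 3) * (3 * (K + C2 * Q)) := by nlinarith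
    have e2 : (p + 3) * R ≤ 2 * (p + 1) * R := by
      apply mul_le_mul_of_nonneg_right _ hR0; linarith
    nlinarith
  have t5 := le_of_mul_le_mul_left t4 (by linarith)
  have t6 := mul_le_mul_of_nonneg_left s3 (by positivity : 0 ≤ 3 * C2 + C1)
  have t7 : (3 * C2 + C1) * (ε * E + A) = (p - 1) / 4 * E + (3 * C2 + C1) * A := by
    rw [← he]; ring
  linarith

lemma rpow_sq {a p : ℝ} (hp : 1 < p) : |a| ^ (p - 1) * a ^ 2 = |a| ^ (p + 1) := by
  rcases eq_or_ne a 0 with rfl | ha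
  · simp [Real.zero_rpow (by linarith : p + 1 ≠ 0)]
  · have : 0 < |a| := abs_pos.mpr ha
    rw [show p + 1 = (p - 1) + (2:ℕ) by push_cast; ring, Real.rpow_add_natCast this.ne', sq_abs]

/-- Energy identity once everything is integrable. -/
lemma energy_eq {n k : ℕ} (hk : k + 3 = n) (hn : 7 ≤ n) {p : ℝ} (hp1 : 1 < p)
    (hq : p + 1 = 2 * n / ((n:ℝ) - 6))
    {V : ℝ} (hV : 0 < V) {ζ : ℕ → EE n → ℝ} {r : ℕ → ℝ} (hc : ∀ N, Cut (ζ N) (r N))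
    (hr0 : Tendsto r atTop (nhds 0))
    (h1 : ∀ (N : ℕ) x, ‖x‖ ≤ (N:ℝ) + 1 → ζ N x = 1)
    (h2 : ∀ (N : ℕ) x, x ∉ Metric.closedBall (0 : EE n) (2 * ((N:ℝ) + 1)) → ζ N x = 0)
    (h3 : ∀ (N : ℕ),
      (r N) ^ n * volume.real (Metric.closedBall (0 : EE n) (2 * ((N:ℝ) + 1))) ≤ V)
    {u : EE n → ℝ} (hu : Sm u)
    (heq : ∀ x, laplacian (laplacian (laplacian u)) x = -(|u x| ^ (p - 1) * u x))
    (hi : Integrable (fun x => |u x| ^ (p + 1))) (hP : Integrable (Ps u)) :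
    (∫ x, Ps u x) = ∫ x, |u x| ^ (p + 1) := by
  have hk0 : k ≠ 0 := by omega
  have key : ∀ δ : ℝ, 0 < δ →
      |(∫ x, |u x| ^ (p + 1)) - ∫ x, Ps u x| ≤ δ * ∫ x, Ps u x := by
    intro δ hδ
    obtain ⟨C, hC, H⟩ := lower n k hk0 δ hδ
    have L1 := lim_cut hi hc h1 (2 * k + 6)
    have L2 := lim_cut hP hc h1 (2 * k + 6)
    have L3 := Cw_lim hk hn hq hV hc hr0 h2 h3 hu hi
    have L4 := (L2.const_mul δ).add (L3.const_mul C)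
    rw [mul_zero, add_zero] at L4
    refine le_of_tendsto_of_tendsto (L1.sub L2).abs L4 (Eventually.of_forall fun N => ?_)
    have h := H u (ζ N) (r N) hu (hc N)
    have e := form_eq hu (hu.mul ((hc N).pow_sm (2 * k + 6)))
      (((hc N).pow_cs' (m := 2 * k + 6) (by omega)).mul_left (f := u))
    rw [e, ← integral_neg] at h
    have e2 : (∫ x, -(laplacian (laplacian (laplacian u)) x * (u x * ζ N x ^ (2 * k + 6))))
        = ∫ x, ζ N x ^ (2 * k + 6) * |u x| ^ (p + 1) := by
      apply integral_congr_ae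
      refine Eventually.of_forall fun x => ?_
      simp only [heq, ← rpow_sq hp1]
      ring
    rw [e2] at h
    exact h
  have hJ : 0 ≤ ∫ x, Ps u x := integral_nonneg fun x => Ps_nn u x
  have : |(∫ x, |u x| ^ (p + 1)) - ∫ x, Ps u x| ≤ 0 := by
    refine le_of_forall_pos_le_add fun ε hε => ?_
    refine (key (ε / ((∫ x, Ps u x) + 1)) (by positivity)).trans ?_
    rw [zero_add, div_mul_eq_mul_div, div_le_iff₀ (by positivity)]
    nlinarith
  have := abs_nonpos_iff.mp this
  linarith

/-- Integrability of the truncated solution. -/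
lemma trunc_int {n k : ℕ} (hk : k + 3 = n) (hn : 7 ≤ n) {p : ℝ} (hp1 : 1 < p)
    (hq : p + 1 = 2 * n / ((n:ℝ) - 6))
    {V : ℝ} {ζ : ℕ → EE n → ℝ} {r : ℕ → ℝ} (hc : ∀ N, Cut (ζ N) (r N))
    (h1 : ∀ (N : ℕ) x, ‖x‖ ≤ (N:ℝ) + 1 → ζ N x = 1)
    (h2 : ∀ (N : ℕ) x, x ∉ Metric.closedBall (0 : EE n) (2 * ((N:ℝ) + 1)) → ζ N x = 0)
    (h3 : ∀ (N : ℕ),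
      (r N) ^ n * volume.real (Metric.closedBall (0 : EE n) (2 * ((N:ℝ) + 1))) ≤ V)
    {v w : EE n → ℝ} (hv : Sm v) (hw : Continuous w) (hwn : ∀ x, 0 ≤ w x)
    (hvw : ∀ x, |v x| ^ (p + 1) ≤ w x * v x ^ 2)
    (hg : HasCompactSupport (fun x => -laplacian (laplacian (laplacian v)) x - w x * v x))
    (hst : ∀ ψ : EE n → ℝ, Sm ψ → HasCompactSupport ψ →
      p * (∫ x, w x * (v x * ψ x) ^ 2) ≤ ∫ x, Ps (fun x => v x * ψ x) x) :
    Integrable (fun x => w x * v x ^ 2) ∧ Integrable (Ps v) := by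
  have hk0 : k ≠ 0 := by omega
  have hM : 2 * k + 6 ≠ 0 := by omega
  have hp' : 0 < p - 1 := by linarith
  set δ := (p - 1) / (2 * (p + 1)) with hδ
  have hδ0 : 0 < δ := by positivity
  have hδ1 : δ ≤ 1 / 2 := by
    rw [hδ, div_le_iff₀ (by positivity)]; linarith
  obtain ⟨C1, hC1, H1⟩ := upper n k hk0 δ hδ0
  obtain ⟨C2, hC2, H2⟩ := lower n k hk0 δ hδ0
  set ε := (p - 1) / (4 * (3 * C2 + C1)) with hε
  have hε0 : 0 < ε := by positivity
  have hF : Continuous (fun x => w x * v x ^ 2) := hw.mul (hv.continuous.pow 2)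
  obtain ⟨A, hA⟩ := Cw_bound hk hn hq hc h2 h3 hv hF hvw hε0
  set g : EE n → ℝ := fun x => -laplacian (laplacian (laplacian v)) x - w x * v x with hgd
  have hgc : Continuous g := by
    exact (hv.lap.lap.lap.continuous.neg).sub (hw.mul hv.continuous)
  have hgv : Integrable (fun x => g x * v x) := int_cs (hgc.mul hv.continuous) hg.mul_right
  set K := ∫ x, |g x * v x| with hK
  have hK0 : 0 ≤ K := integral_nonneg fun x => abs_nonneg _
  have iE : ∀ N, Integrable (fun x => ζ N x ^ (2 * k + 6) * (w x * v x ^ 2)) := fun N => by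
    simpa using wint (hc N) hM 1 hF
  have s1 : ∀ N, p * (∫ x, ζ N x ^ (2 * k + 6) * (w x * v x ^ 2)) ≤
      (1 + δ) * (∫ x, Dw v (ζ N) k x) + C1 * (∫ x, Cw v (ζ N) (r N) k x) := by
    intro N
    have a := hst (fun x => ζ N x ^ (k + 3)) ((hc N).pow_sm _) ((hc N).pow_cs' (by omega))
    have b := H1 v (ζ N) (r N) hv (hc N)
    refine le_trans (le_of_eq ?_) (a.trans b)
    congr 2
    ext x
    ring
  have s2 : ∀ N, (1 - δ) * (∫ x, Dw v (ζ N) k x) ≤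
      (∫ x, ζ N x ^ (2 * k + 6) * (w x * v x ^ 2)) + K + C2 * (∫ x, Cw v (ζ N) (r N) k x) := by
    intro N
    have h := H2 v (ζ N) (r N) hv (hc N)
    have e := form_eq hv (hv.mul ((hc N).pow_sm (2 * k + 6)))
      (((hc N).pow_cs' (m := 2 * k + 6) hM).mul_left (f := v))
    have ig : Integrable (fun x => ζ N x ^ (2 * k + 6) * (g x * v x)) := by
      simpa using wint (hc N) hM 1 (hgc.mul hv.continuous)
    have e2 : - (∫ x, laplacian (laplacian (laplacian v)) x * (v x * ζ N x ^ (2 * k + 6)))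
        = (∫ x, ζ N x ^ (2 * k + 6) * (w x * v x ^ 2))
          + ∫ x, ζ N x ^ (2 * k + 6) * (g x * v x) := by
      rw [← integral_neg, ← integral_add (iE N) ig]
      congr 1
      ext x
      simp only [hgd]
      ring
    have e3 : (∫ x, ζ N x ^ (2 * k + 6) * (g x * v x)) ≤ K := by
      apply integral_mono ig hgv.abs
      intro x
      have z0 : 0 ≤ ζ N x ^ (2 * k + 6) := pow_nonneg ((hc N).nn x) _
      have z1 : ζ N x ^ (2 * k + 6) ≤ 1 := pow_le_one₀ ((hc N).nn x) ((hc N).le x)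
      have := le_abs_self (g x * v x)
      have := abs_nonneg (g x * v x)
      show ζ N x ^ (2 * k + 6) * (g x * v x) ≤ |g x * v x|
      nlinarith
    rw [e.trans e2] at h
    have := (abs_le.mp h).1
    linarith
  have Q0 : ∀ N, 0 ≤ ∫ x, Cw v (ζ N) (r N) k x := fun N =>
    integral_nonneg fun x => Cw_nn (hc N) x
  have E0 : ∀ N, (∫ x, ζ N x ^ (2 * k + 6) * (w x * v x ^ 2)) ≤
      4 / (p - 1) * (3 * K + (3 * C2 + C1) * A) := by
    intro N
    have := absorb hp1 hδ hC1 hC2 hε (s1 N) (s2 N) (hA N) hK0 (Q0 N)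
    rw [div_mul_eq_mul_div, le_div_iff₀ hp']
    linarith
  set B := 4 / (p - 1) * (3 * K + (3 * C2 + C1) * A) with hB
  have D0 : ∀ N, (∫ x, ζ N x ^ (2 * k + 6) * Ps v x) ≤ 2 * (B + K + C2 * (ε * B + A)) := by
    intro N
    have hDn : 0 ≤ ∫ x, Dw v (ζ N) k x := integral_nonneg fun x => Dw_nn (hc N) x
    have a := s2 N
    have b := hA N
    have c := E0 N
    have d := mul_le_mul_of_nonneg_left c hε0.le
    have f := mul_le_mul_of_nonneg_left (b.trans (by linarith : _ ≤ ε * B + A)) hC2.le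
    have : (1 / 2) * (∫ x, Dw v (ζ N) k x) ≤ (1 - δ) * (∫ x, Dw v (ζ N) k x) := by
      apply mul_le_mul_of_nonneg_right _ hDn; linarith
    have : (∫ x, Dw v (ζ N) k x) ≤ 2 * (B + K + C2 * (ε * B + A)) := by linarith
    exact this
  exact ⟨int_of_bdd hF (fun x => mul_nonneg (hwn x) (sq_nonneg _)) hc h1 hM _ E0,
    int_of_bdd (Ps_cont hv) (Ps_nn v) hc h1 hM _ D0⟩

/-- **Theorem 1.2(3) (critical case).** Let `n ≥ 7`, `p = (n+6)/(n-6)`, and let `u` be a smooth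
solution of `(-Δ)³ u = |u|^{p-1} u` on `ℝⁿ` that is stable outside a compact set `Θ`. Then `u`
has finite energy: `∫ ‖∇Δu‖² = ∫ |u|^{p+1} < +∞`. -/
theorem triharmonic_finiteMorse_critical_finiteEnergy (n : ℕ) (hn : 7 ≤ n) (p : ℝ)
    (hp : p = ((n : ℝ) + 6) / ((n : ℝ) - 6))
    (u : EuclideanSpace ℝ (Fin n) → ℝ) (hu : ContDiff ℝ (⊤ : ℕ∞) u)
    (heq : ∀ x, laplacian (laplacian (laplacian u)) x = -(|u x| ^ (p - 1) * u x))
    (Θ : Set (EuclideanSpace ℝ (Fin n))) (hΘ : IsCompact Θ)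
    (hstab : ∀ φ : EuclideanSpace ℝ (Fin n) → ℝ, ContDiff ℝ (⊤ : ℕ∞) φ →
      HasCompactSupport φ → tsupport φ ⊆ Θᶜ →
      p * (∫ x, |u x| ^ (p - 1) * φ x ^ 2) ≤ ∫ x, ‖gradient (laplacian φ) x‖ ^ 2) :
    Integrable (fun x => ‖gradient (laplacian u) x‖ ^ 2) ∧
    Integrable (fun x => |u x| ^ (p + 1)) ∧
    (∫ x, ‖gradient (laplacian u) x‖ ^ 2) = ∫ x, |u x| ^ (p + 1) := by

  have hn' : (7:ℝ) ≤ n := by exact_mod_cast hn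
  have h6 : 0 < (n:ℝ) - 6 := by linarith
  have hp1 : 1 < p := by
    rw [hp, lt_div_iff₀ h6]; linarith
  have hq : p + 1 = 2 * n / ((n:ℝ) - 6) := by
    rw [hp]; field_simp; ring
  obtain ⟨k, hk⟩ : ∃ k, k + 3 = n := ⟨n - 3, by omega⟩
  obtain ⟨V, r, ζ, hV, hc, hr0, h1, h2, h3⟩ := cut_exists n
  obtain ⟨ρ, hρ⟩ := hΘ.isBounded.subset_closedBall (0 : EE n)
  set R : ℝ := max ρ 0 with hR
  have hR0 : 0 ≤ R := le_max_right _ _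
  have hΘR : ∀ x ∈ Θ, ‖x‖ ≤ R := fun x hx =>
    (mem_closedBall_zero_iff.mp (hρ hx)).trans (le_max_left _ _)
  let b : ContDiffBump (0 : EE n) := ⟨R + 1, R + 2, by linarith, by linarith⟩
  set v : EE n → ℝ := fun x => (1 - b x) * u x with hvd
  have hv : Sm v := (contDiff_const.sub b.contDiff).mul hu
  have hvin : ∀ x, ‖x‖ ≤ R + 1 → v x = 0 := by
    intro x hx
    have : b x = 1 := b.one_of_mem_closedBall (mem_closedBall_zero_iff.mpr hx)
    simp [hvd, this]
  have hvout : ∀ x, R + 2 < ‖x‖ → v =ᶠ[nhds x] u := by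
    intro x hx
    have ho : IsOpen {y : EE n | R + 2 < ‖y‖} := isOpen_lt continuous_const continuous_norm
    filter_upwards [ho.mem_nhds hx] with y hy
    have : b y = 0 := b.zero_of_le_dist (by rw [dist_zero_right]; exact le_of_lt hy)
    simp [hvd, this]
  have hvle : ∀ x, |v x| ≤ |u x| := by
    intro x
    have a := b.nonneg (x := x)
    have c := b.le_one (x := x)
    simp only [hvd, abs_mul]
    rw [abs_of_nonneg (by linarith : 0 ≤ 1 - b x)]
    exact mul_le_of_le_one_left (abs_nonneg _) (by linarith)
  set w : EE n → ℝ := fun x => |u x| ^ (p - 1) with hwd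
  have hw : Continuous w := hu.continuous.abs.rpow_const fun _ => Or.inr (by linarith)
  have hwn : ∀ x, 0 ≤ w x := fun x => Real.rpow_nonneg (abs_nonneg _) _
  have hvw : ∀ x, |v x| ^ (p + 1) ≤ w x * v x ^ 2 := by
    intro x
    rw [← rpow_sq hp1]
    exact mul_le_mul_of_nonneg_right
      (Real.rpow_le_rpow (abs_nonneg _) (hvle x) (by linarith)) (sq_nonneg _)
  have hg : HasCompactSupport (fun x => -laplacian (laplacian (laplacian v)) x - w x * v x) := by
    apply HasCompactSupport.intro (isCompact_closedBall (0 : EE n) (R + 2))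
    intro x hx
    rw [mem_closedBall_zero_iff, not_le] at hx
    have h := hvout x hx
    rw [(lap_local (lap_local (lap_local h))).eq_of_nhds, h.eq_of_nhds, heq x]
    simp [hwd]
  have hst : ∀ ψ : EE n → ℝ, Sm ψ → HasCompactSupport ψ →
      p * (∫ x, w x * (v x * ψ x) ^ 2) ≤ ∫ x, Ps (fun x => v x * ψ x) x := by
    intro ψ hψ hψc
    have := hstab (fun x => v x * ψ x) (hv.mul hψ) (hψc.mul_left (f := v)) ?_
    · simp only [grad_sq] at this
      exact this
    · intro x hx hxΘ
      refine notMem_tsupport_iff_eventuallyEq.mpr ?_ hx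
      have ho : IsOpen {y : EE n | ‖y‖ < R + 1} := isOpen_lt continuous_norm continuous_const
      have hxo : ‖x‖ < R + 1 := by
        have := hΘR x hxΘ
        linarith
      filter_upwards [ho.mem_nhds hxo] with y hy
      simp [hvin y (le_of_lt hy)]
  obtain ⟨i1, i2⟩ := trunc_int hk hn hp1 hq hc h1 h2 h3 hv hw hwn hvw hg hst
  have iu : Integrable (fun x => |u x| ^ (p + 1)) := by
    refine int_of_eq_off (hw.mul (hv.continuous.pow 2))
      (hu.continuous.abs.rpow_const fun _ => Or.inr (by linarith)) (R + 2) ?_ i1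
    intro x hx
    show w x * v x ^ 2 = |u x| ^ (p + 1)
    rw [(hvout x hx).eq_of_nhds, ← rpow_sq hp1]
  have iP : Integrable (Ps u) :=
    int_of_eq_off (Ps_cont hv) (Ps_cont hu) (R + 2) (fun x hx => Ps_local (hvout x hx)) i2
  have e := energy_eq hk hn hp1 hq hV hc hr0 h1 h2 h3 hu heq iu iP
  have eP : (fun x => ‖gradient (laplacian u) x‖ ^ 2) = Ps u := by
    ext x
    exact grad_sq _ _
  rw [eP]
  exact ⟨iP, iu, e⟩
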